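/- arXiv:1705.09957 — 3 statements merged into one kernel-verified Lean document; each statement's English description precedes it below -/
import Mathlib

section
/- Let n be odd and let a, b be integers with b ≥ 1, a ≥ b + 2 and a + b < n, and let σ be a uniformly random permutation of {1,…,n}. Then the probability that D_{a,b}(σ) = 0 is at most (n+1)/(4n(a+1)). -/
/-! Write `S = D_{a+1,b-1}` and let `y = σ(a+1)` (in 1-based notation), so that
`D_{a,b}(σ) = S(σ) - 2y`. Three estimates are multiplied.

* Permuting the first `a + 1` positions leaves `S` fixed, and `D_{a,b} = 0` forces `y = S / 2`;
  hence among the `a + 1` ways of choosing which of these values is `y`, at most one works, and none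
  unless `S` is even and `S ≤ 2n` (`card_D_zero_mul_le`).
* The reflection `x ↦ n + 1 - x` of the values turns `S` into `(a - b + 2)(n + 1) - S`. It preserves
  the parity of `S` because `n` is odd, and it sends `S ≤ 2n` to `S > 2n` because `a - b ≥ 2`; so at
  most half of the permutations with `S` even have `S ≤ 2n` (`two_mul_card_small_le`).
* The parity of `S` is that of the sum of the values at `m = a + b` positions, `0 < m < n`. Let `f(T)`
  be the sum over all `σ` of the sign `∏_{i ∈ T} (-1)^{σ(i)}`. As the signs of `1, …, n` add up to
  `-1`, multiplying by `∑_j (-1)^{σ(j)} = -1` gives the recursion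
  `-f(T) = ∑_{j ∈ T} f(T \ {j}) + ∑_{j ∉ T} f(T ∪ {j})`. Since `f(T)` depends only on `|T|` and
  `|f(T)| = |f(Tᶜ)|`, this yields `n |f(T)| ≤ n!` (`abs_signSum_le`), so `S` is even with probability
  at most `(n + 1) / (2n)` (`card_even_le`).
-/

/-- `D n a b σ = (σ(1)+⋯+σ(a)) − (σ(a+1)+⋯+σ(a+b))` for a permutation `σ` of `{1,…,n}`,
modelled as a permutation of `Fin n` with values `σ i + 1 ∈ {1,…,n}`. -/
def D (n a b : ℕ) (σ : Equiv.Perm (Fin n)) : ℤ :=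
  (∑ i ∈ Finset.univ.filter (fun i : Fin n => (i : ℕ) < a), ((σ i : ℕ) + 1 : ℤ))
    - ∑ i ∈ Finset.univ.filter (fun i : Fin n => a ≤ (i : ℕ) ∧ (i : ℕ) < a + b),
        ((σ i : ℕ) + 1 : ℤ)

open Finset

/-! ### Parity of the sum over a block of positions -/

/-- The sign `(-1)^(x+1)` of the value `x + 1 ∈ {1,…,n}` that `x : Fin n` stands for. -/
def valSign {n : ℕ} (x : Fin n) : ℤ := (((x : ℕ) + 1 : ℤ).negOnePow : ℤ)

/-- The sum over all permutations of the sign of the sum of the values at the positions in `T`. -/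
def signSum {n : ℕ} (T : Finset (Fin n)) : ℤ :=
  ∑ σ : Equiv.Perm (Fin n), ∏ i ∈ T, valSign (σ i)

lemma valSign_mul_self {n : ℕ} (x : Fin n) : valSign x * valSign x = 1 := by
  unfold valSign
  exact Int.units_coe_mul_self _

lemma sum_valSign {n : ℕ} (hn : Odd n) : ∑ x : Fin n, valSign x = -1 := by
  obtain ⟨k, rfl⟩ := hn
  unfold valSign
  rw [Fin.sum_univ_eq_sum_range (fun x : ℕ => ((((x : ℤ) + 1).negOnePow : ℤˣ) : ℤ))]
  induction k with
  | zero => simp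
  | succ k ih =>
    rw [show 2 * (k + 1) + 1 = 2 * k + 1 + 1 + 1 by ring, sum_range_succ, sum_range_succ, ih]
    push_cast
    have h2 : Int.negOnePow 2 = 1 := Int.negOnePow_even 2 (by decide)
    simp [Int.negOnePow_add, h2]

lemma signSum_empty {n : ℕ} : signSum (∅ : Finset (Fin n)) = (n.factorial : ℤ) := by
  simp [signSum, Fintype.card_perm]

lemma signSum_congr {n : ℕ} {T T' : Finset (Fin n)} (h : #T = #T') : signSum T = signSum T' := by
  obtain ⟨e, he⟩ : ∃ e : Equiv.Perm (Fin n), T.map e.toEmbedding = T' := by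
    have e0 : {x // x ∈ T} ≃ {x // x ∈ T'} := Finset.equivOfCardEq h
    refine ⟨e0.extendSubtype, Finset.eq_of_subset_of_card_le ?_ (by simp [h])⟩
    intro y hy
    obtain ⟨x, hx, rfl⟩ := Finset.mem_map.1 hy
    exact e0.extendSubtype_mem x hx
  subst he
  unfold signSum
  refine Fintype.sum_equiv (Equiv.mulRight e⁻¹) _ _ fun σ => ?_
  simp

lemma signSum_rec {n : ℕ} (hn : Odd n) (T : Finset (Fin n)) :
    -signSum T = ∑ j ∈ T, signSum (T.erase j) + ∑ j ∈ Tᶜ, signSum (insert j T) := by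
  have h1 : -signSum T =
      ∑ j : Fin n, ∑ σ : Equiv.Perm (Fin n), valSign (σ j) * ∏ i ∈ T, valSign (σ i) := by
    rw [sum_comm, signSum, ← sum_neg_distrib]
    refine sum_congr rfl fun σ _ => ?_
    rw [← sum_mul, Equiv.sum_comp σ (fun x => valSign x), sum_valSign hn]
    ring
  rw [h1, ← sum_add_sum_compl T]
  congr 1
  · refine sum_congr rfl fun j hj => sum_congr rfl fun σ _ => ?_
    rw [← mul_prod_erase T _ hj, ← mul_assoc, valSign_mul_self, one_mul]
  · refine sum_congr rfl fun j hj => sum_congr rfl fun σ _ => ?_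
    rw [prod_insert (by simpa using hj)]

/-- The recursion solved for the largest set, with all equal terms collected. -/
lemma signSum_step {n : ℕ} (hn : Odd n) {T : Finset (Fin n)} {t : Fin n} (ht : t ∉ T) :
    ((n : ℤ) - #T) * signSum (insert t T) = -signSum T - ∑ j ∈ T, signSum (T.erase j) := by
  have h := signSum_rec hn T
  have h2 : ∑ j ∈ Tᶜ, signSum (insert j T) = ((n : ℤ) - #T) * signSum (insert t T) := by
    rw [sum_congr rfl (g := fun _ => signSum (insert t T)), sum_const, card_compl,
      Fintype.card_fin, nsmul_eq_mul, Nat.cast_sub (by simpa using card_le_univ T)]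
    intro j hj
    apply signSum_congr
    rw [card_insert_of_notMem ht, card_insert_of_notMem (by simpa using hj)]
  linarith

lemma signSum_one {n : ℕ} (hn : Odd n) {T : Finset (Fin n)} (hT : #T = 1) :
    (n : ℤ) * signSum T = -n.factorial := by
  obtain ⟨t, rfl⟩ := card_eq_one.1 hT
  have := signSum_step hn (notMem_empty t)
  simpa [signSum_empty] using this

/-- For small sets, the recursion gives the bound by induction on the size; sizes `1` and `2` are
computed exactly since there the recursion involves `signSum ∅ = n!`. -/
lemma abs_signSum_le_of_small {n : ℕ} (hn : Odd n) (k : ℕ) :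
    1 ≤ k → 2 * k ≤ n + 1 → ∀ T : Finset (Fin n), #T = k → (n : ℤ) * |signSum T| ≤ n.factorial := by
  induction k using Nat.strong_induction_on with
  | _ k ih =>
  intro hk hkn T hT
  have hn0 : (0 : ℤ) ≤ n := by positivity
  have hf0 : (0 : ℤ) ≤ n.factorial := by positivity
  rcases eq_or_lt_of_le hk with h1 | h1
  · have := signSum_one hn (hT.trans h1.symm)
    rw [← Nat.abs_cast n, ← abs_mul, this, abs_neg, abs_of_nonneg hf0]
  obtain ⟨t, ht⟩ : T.Nonempty := card_pos.1 (by omega)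
  obtain ⟨T₀, ht₀, rfl⟩ : ∃ T₀, t ∉ T₀ ∧ insert t T₀ = T :=
    ⟨T.erase t, notMem_erase t T, insert_erase ht⟩
  rw [card_insert_of_notMem ht₀] at hT
  have hstep := signSum_step hn ht₀
  rcases eq_or_lt_of_le (Nat.succ_le_of_lt h1) with h2 | h2
  · have hc : #T₀ = 1 := by omega
    have hone := signSum_one hn hc
    have hsum : ∑ j ∈ T₀, signSum (T₀.erase j) = n.factorial := by
      obtain ⟨s, rfl⟩ := card_eq_one.1 hc
      simp [signSum_empty]
    rw [hsum, hc] at hstep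
    have hn1 : (0 : ℤ) < n - 1 := by omega
    have : (n : ℤ) * signSum (insert t T₀) = -n.factorial := by
      have h3 : ((n : ℤ) - 1) * (n * signSum (insert t T₀)) = (n - 1) * (-n.factorial) := by
        push_cast at hstep
        linear_combination (n : ℤ) * hstep - hone
      exact mul_left_cancel₀ hn1.ne' h3
    rw [← Nat.abs_cast n, ← abs_mul, this, abs_neg, abs_of_nonneg hf0]
  · have hA := ih #T₀ (by omega) (by omega) (by omega) T₀ rfl
    have hB : ∀ j ∈ T₀, (n : ℤ) * |signSum (T₀.erase j)| ≤ n.factorial := fun j hj =>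
      ih (#T₀ - 1) (by omega) (by omega) (by omega) _ (card_erase_of_mem hj)
    have hS : (n : ℤ) * |∑ j ∈ T₀, signSum (T₀.erase j)| ≤ #T₀ * n.factorial := by
      calc (n : ℤ) * |∑ j ∈ T₀, signSum (T₀.erase j)|
          ≤ n * ∑ j ∈ T₀, |signSum (T₀.erase j)| := by gcongr; exact abs_sum_le_sum_abs _ _
        _ = ∑ j ∈ T₀, n * |signSum (T₀.erase j)| := mul_sum _ _ _
        _ ≤ ∑ j ∈ T₀, (n.factorial : ℤ) := sum_le_sum hB
        _ = #T₀ * n.factorial := by simp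
    have hpos : (0 : ℤ) < n - #T₀ := by omega
    have habs : ((n : ℤ) - #T₀) * |signSum (insert t T₀)|
        ≤ |signSum T₀| + |∑ j ∈ T₀, signSum (T₀.erase j)| := by
      have h3 := congrArg abs hstep
      rw [abs_mul, abs_of_pos hpos] at h3
      rw [h3, ← abs_neg (signSum T₀)]
      exact abs_sub _ _
    refine le_of_mul_le_mul_left ?_ hpos
    calc ((n : ℤ) - #T₀) * (n * |signSum (insert t T₀)|)
        = n * ((n - #T₀) * |signSum (insert t T₀)|) := by ring
      _ ≤ n * (|signSum T₀| + |∑ j ∈ T₀, signSum (T₀.erase j)|) := by gcongr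
      _ ≤ (#T₀ + 1) * n.factorial := by linarith
      _ ≤ (n - #T₀) * n.factorial := by gcongr; omega

lemma abs_prod_valSign {n : ℕ} (T : Finset (Fin n)) (σ : Equiv.Perm (Fin n)) :
    |∏ i ∈ T, valSign (σ i)| = 1 := by
  rw [abs_prod]
  exact prod_eq_one fun i _ => Int.isUnit_iff_abs_eq.1 (Units.isUnit _)

/-- The product of all signs does not depend on the permutation. -/
lemma abs_signSum_compl {n : ℕ} (T : Finset (Fin n)) : |signSum Tᶜ| = |signSum T| := by
  have h : signSum Tᶜ = (∏ x : Fin n, valSign x) * signSum T := by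
    rw [signSum, signSum, mul_sum]
    refine sum_congr rfl fun σ _ => ?_
    rw [← Equiv.prod_comp σ (fun x => valSign x), ← prod_mul_prod_compl T, mul_right_comm,
      ← prod_mul_distrib, prod_congr rfl fun i _ => valSign_mul_self (σ i)]
    simp
  have h1 := abs_prod_valSign (univ : Finset (Fin n)) 1
  simp only [Equiv.Perm.coe_one, id] at h1
  rw [h, abs_mul, h1, one_mul]

lemma abs_signSum_le {n : ℕ} (hn : Odd n) (T : Finset (Fin n)) (h1 : 1 ≤ #T) (h2 : #T < n) :
    (n : ℤ) * |signSum T| ≤ n.factorial := by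
  by_cases h : 2 * #T ≤ n + 1
  · exact abs_signSum_le_of_small hn _ h1 h T rfl
  · rw [← abs_signSum_compl]
    have hc : #Tᶜ = n - #T := by simp [card_compl]
    exact abs_signSum_le_of_small hn _ (by omega) (by omega) Tᶜ rfl

lemma coe_negOnePow_sum {n : ℕ} (T : Finset (Fin n)) (σ : Equiv.Perm (Fin n)) :
    (((∑ i ∈ T, ((σ i : ℕ) + 1 : ℤ)).negOnePow : ℤˣ) : ℤ) = ∏ i ∈ T, valSign (σ i) := by
  induction T using Finset.induction_on with
  | empty => simp
  | insert j T hj ih =>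
    rw [sum_insert hj, prod_insert hj, Int.negOnePow_add, Units.val_mul, ih]
    rfl

lemma coe_negOnePow_D (n a b : ℕ) (σ : Equiv.Perm (Fin n)) :
    (((D n a b σ).negOnePow : ℤˣ) : ℤ)
      = ∏ i ∈ univ.filter (fun i : Fin n => (i : ℕ) < a + b), valSign (σ i) := by
  have hU : univ.filter (fun i : Fin n => (i : ℕ) < a + b)
      = univ.filter (fun i : Fin n => (i : ℕ) < a)
        ∪ univ.filter (fun i : Fin n => a ≤ (i : ℕ) ∧ (i : ℕ) < a + b) := by
    ext i; simp; omega
  have hd : Disjoint (univ.filter (fun i : Fin n => (i : ℕ) < a))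
      (univ.filter (fun i : Fin n => a ≤ (i : ℕ) ∧ (i : ℕ) < a + b)) := by
    rw [disjoint_filter]; intros; omega
  rw [D, Int.negOnePow_sub, Units.val_mul, coe_negOnePow_sum, coe_negOnePow_sum, hU,
    prod_union hd]

lemma card_filter_lt {n m : ℕ} (h : m ≤ n) :
    #(univ.filter (fun i : Fin n => (i : ℕ) < m)) = m := by
  rw [Fin.card_filter_val_lt, min_eq_right h]

lemma card_even_le {n a b : ℕ} (hn : Odd n) (h1 : 1 ≤ a + b) (h2 : a + b < n) :
    2 * n * #(univ.filter fun σ : Equiv.Perm (Fin n) => Even (D n a b σ))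
      ≤ (n + 1) * n.factorial := by
  set E := univ.filter fun σ : Equiv.Perm (Fin n) => Even (D n a b σ) with hE
  have hcard := card_filter_lt h2.le
  have hb := abs_signSum_le hn (univ.filter (fun i : Fin n => (i : ℕ) < a + b))
    (by omega) (by omega)
  have hs : signSum (univ.filter (fun i : Fin n => (i : ℕ) < a + b)) = 2 * #E - n.factorial := by
    have : ∀ σ : Equiv.Perm (Fin n),
        ∏ i ∈ univ.filter (fun i : Fin n => (i : ℕ) < a + b), valSign (σ i)
          = 2 * (if Even (D n a b σ) then 1 else 0) - 1 := by
      intro σ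
      rw [← coe_negOnePow_D]
      split_ifs with h
      · rw [Int.negOnePow_even _ h]; norm_num
      · rw [Int.negOnePow_odd _ (Int.not_even_iff_odd.1 h)]; norm_num
    rw [signSum, sum_congr rfl fun σ _ => this σ, sum_sub_distrib, ← mul_sum, sum_boole]
    simp [hE, Fintype.card_perm]
  rw [hs] at hb
  have h3 : (n : ℤ) * (2 * #E - n.factorial) ≤ n.factorial :=
    (mul_le_mul_of_nonneg_left (le_abs_self _) (by positivity)).trans hb
  zify
  linarith

/-! ### Reflection of the values -/

lemma D_reflect {n a b : ℕ} (h : a + b ≤ n) (σ : Equiv.Perm (Fin n)) :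
    D n a b (Fin.revPerm * σ) = ((a : ℤ) - b) * (n + 1) - D n a b σ := by
  have hv : ∀ i, ((((Fin.revPerm * σ : Equiv.Perm (Fin n)) i : Fin n) : ℕ) : ℤ) + 1
      = (n + 1) - ((σ i : ℕ) + 1) := by
    intro i
    simp only [Equiv.Perm.coe_mul, Function.comp_apply, Fin.revPerm_apply, Fin.val_rev]
    omega
  have hb : #(univ.filter (fun i : Fin n => a ≤ (i : ℕ) ∧ (i : ℕ) < a + b)) = b := by
    have hd : univ.filter (fun i : Fin n => a ≤ (i : ℕ) ∧ (i : ℕ) < a + b)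
        = univ.filter (fun i : Fin n => (i : ℕ) < a + b)
          \ univ.filter (fun i : Fin n => (i : ℕ) < a) := by
      ext i; simp; omega
    rw [hd, card_sdiff_of_subset, card_filter_lt h, card_filter_lt (by omega)]
    · omega
    · intro i; simp; omega
  unfold D
  simp only [hv]
  rw [sum_sub_distrib, sum_sub_distrib, sum_const, sum_const, hb, card_filter_lt (by omega)]
  simp only [nsmul_eq_mul]
  ring

lemma two_mul_card_small_le {n a b : ℕ} (hn : Odd n) (hab : b + 4 ≤ a) (h : a + b ≤ n) :
    2 * #(univ.filter fun σ : Equiv.Perm (Fin n) => Even (D n a b σ) ∧ D n a b σ ≤ 2 * n)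
      ≤ #(univ.filter fun σ : Equiv.Perm (Fin n) => Even (D n a b σ)) := by
  set E := univ.filter fun σ : Equiv.Perm (Fin n) => Even (D n a b σ) with hE
  have hsplit := card_filter_add_card_filter_not (s := E) (fun σ => D n a b σ ≤ 2 * n)
  have hle : #(E.filter fun σ => D n a b σ ≤ 2 * n)
      ≤ #(E.filter fun σ => ¬ D n a b σ ≤ 2 * n) := by
    refine card_le_card_of_injOn (fun σ => Fin.revPerm * σ) ?_
      (fun σ _ τ _ hst => mul_left_cancel hst)
    intro σ hσ
    simp only [hE, coe_filter, mem_filter, mem_univ, true_and, Set.mem_ofPred_eq] at hσ ⊢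
    rw [D_reflect h]
    have hev : Even ((n : ℤ) + 1) := by exact_mod_cast hn.add_one
    refine ⟨(hev.mul_left _).sub hσ.1, ?_⟩
    have h4 : (4 : ℤ) ≤ (a : ℤ) - b := by omega
    nlinarith [hσ.2]
  rw [← filter_filter, ← hE]
  omega

/-! ### Permuting the first `a + 1` positions -/

/-- Moving the value at position `a` from the negative to the positive block. -/
lemma D_eq_sub {n a b : ℕ} (h : a < n) (σ : Equiv.Perm (Fin n)) :
    D n a (b + 1) σ = D n (a + 1) b σ - 2 * ((σ ⟨a, h⟩ : ℕ) + 1) := by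
  have h1 : univ.filter (fun i : Fin n => (i : ℕ) < a + 1)
      = insert ⟨a, h⟩ (univ.filter (fun i : Fin n => (i : ℕ) < a)) := by
    ext i; simp [Fin.ext_iff]; omega
  have h2 : univ.filter (fun i : Fin n => a ≤ (i : ℕ) ∧ (i : ℕ) < a + (b + 1))
      = insert ⟨a, h⟩
        (univ.filter (fun i : Fin n => a + 1 ≤ (i : ℕ) ∧ (i : ℕ) < a + 1 + b)) := by
    ext i; simp [Fin.ext_iff]; omega
  rw [D, D, h1, h2, sum_insert (by simp), sum_insert (by simp)]
  ring

lemma D_mul_swap {n a b : ℕ} {i j : Fin n} (hi : (i : ℕ) < a) (hj : (j : ℕ) < a)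
    (σ : Equiv.Perm (Fin n)) : D n a b (σ * Equiv.swap i j) = D n a b σ := by
  unfold D
  congr 1
  · refine sum_equiv (Equiv.swap i j) (fun k => ?_) (fun k _ => rfl)
    simp only [mem_filter, mem_univ, true_and, Equiv.swap_apply_def]
    split_ifs with h1 h2
    · simp [h1, hi, hj]
    · simp [h2, hi, hj]
    · rfl
  · refine sum_congr rfl fun k hk => ?_
    simp only [mem_filter, mem_univ, true_and] at hk
    rw [Equiv.Perm.mul_apply, Equiv.swap_apply_of_ne_of_ne] <;> (rintro rfl; omega)

lemma card_D_zero_mul_le {n a b : ℕ} (h : a < n) :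
    (a + 1) * #(univ.filter fun σ : Equiv.Perm (Fin n) => D n a (b + 1) σ = 0)
      ≤ #(univ.filter fun σ : Equiv.Perm (Fin n) =>
          Even (D n (a + 1) b σ) ∧ D n (a + 1) b σ ≤ 2 * n) := by
  rw [← card_filter_lt (n := n) (m := a + 1) (by omega), ← card_product]
  refine card_le_card_of_injOn (fun p => p.2 * Equiv.swap p.1 ⟨a, h⟩) ?_ ?_
  · rintro ⟨i, σ⟩ hp
    simp only [coe_product, coe_filter, mem_univ, true_and, Set.mem_prod,
      Set.mem_ofPred_eq] at hp ⊢
    obtain ⟨hi, hσ⟩ := hp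
    have hlt := (σ ⟨a, h⟩).isLt
    rw [card_filter_lt (by omega)] at *
    rw [D_mul_swap hi (by simp)]
    rw [D_eq_sub h] at hσ
    exact ⟨⟨(σ ⟨a, h⟩ : ℕ) + 1, by linarith⟩, by omega⟩
  · rintro ⟨i, σ⟩ hp ⟨j, τ⟩ hq heq
    simp only [coe_product, coe_filter, mem_univ, true_and, Set.mem_prod,
      Set.mem_ofPred_eq] at hp hq heq
    obtain ⟨hi, hσ⟩ := hp
    obtain ⟨hj, hτ⟩ := hq
    -- The common image `ρ` has `ρ i = σ a`, `ρ j = τ a`, and both equal `D n (a+1) b ρ / 2 - 1`.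
    have hD : D n (a + 1) b σ = D n (a + 1) b τ := by
      rw [← D_mul_swap (i := i) (j := ⟨a, h⟩) hi (by simp) σ, heq, D_mul_swap hj (by simp) τ]
    rw [D_eq_sub h] at hσ hτ
    have hval : σ ⟨a, h⟩ = τ ⟨a, h⟩ := Fin.ext (by omega)
    have hij : i = j := by
      have e1 : (σ * Equiv.swap i ⟨a, h⟩) i = σ ⟨a, h⟩ := by simp
      have e2 : (τ * Equiv.swap j ⟨a, h⟩) j = τ ⟨a, h⟩ := by simp
      rw [heq] at e1
      exact (τ * Equiv.swap j ⟨a, h⟩).injective (e1.trans (hval.trans e2.symm))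
    subst hij
    rw [mul_right_cancel heq]

/-- For `n` odd and `a ≥ b + 2`, `b ≥ 1`, `a + b < n`, a uniformly random permutation
`σ` of `{1,…,n}` satisfies `D_{a,b}(σ) = 0` with probability at most
`(n+1)/(4n(a+1))`. -/
theorem prob_D_odd_bigdiff (a b n : ℕ) (hn : Odd n) (hb : 1 ≤ b) (hab : b + 2 ≤ a)
    (habn : a + b < n) :
    ((Finset.univ.filter
        (fun σ : Equiv.Perm (Fin n) => D n a b σ = 0)).card : ℚ)
      / (Nat.factorial n : ℚ)
      ≤ ((n : ℚ) + 1) / (4 * (n : ℚ) * ((a : ℚ) + 1)) := by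
  obtain ⟨b, rfl⟩ : ∃ c, b = c + 1 := ⟨b - 1, by omega⟩
  have h1 := card_D_zero_mul_le (n := n) (a := a) (b := b) (by omega)
  have h2 := two_mul_card_small_le (a := a + 1) (b := b) hn (by omega) (by omega)
  have h3 := card_even_le (a := a + 1) (b := b) hn (by omega) (by omega)
  have hmain : 4 * n * (a + 1) *
      #(univ.filter fun σ : Equiv.Perm (Fin n) => D n a (b + 1) σ = 0)
      ≤ (n + 1) * n.factorial := by
    refine le_trans ?_ h3
    refine le_trans ?_ (Nat.mul_le_mul_left (2 * n) h2)
    nlinarith [Nat.mul_le_mul_left (4 * n) h1]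
  have hn0 : (0 : ℚ) < n := by exact_mod_cast (show 0 < n by omega)
  rw [div_le_div_iff₀ (by positivity) (by positivity)]
  have hmain' := (Nat.cast_le (α := ℚ)).2 hmain
  push_cast at hmain'
  linarith
end

section
/- Let a, b, n be integers with b ≥ 1, a ≥ b + 3 and a + b < n, and let σ be a uniformly random permutation of {1,…,n}. Then the probability that D_{a,b}(σ) = 0 is at most 1/(n + 1/2) = 1/n − 1/(n(2n+1)). -/
open Finset

namespace BigDiff

variable {n : ℕ}

/-- The coefficient of `σ i` in `D n a b σ`. -/
def wt (n a b : ℕ) (i : Fin n) : ℤ :=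
  if (i : ℕ) < a then 1 else if (i : ℕ) < a + b then -1 else 0

lemma D_eq_sum (a b : ℕ) (σ : Equiv.Perm (Fin n)) :
    D n a b σ = ∑ i, wt n a b i * ((σ i : ℕ) + 1 : ℤ) := by
  unfold D wt
  rw [Finset.sum_filter, Finset.sum_filter, ← Finset.sum_sub_distrib]
  refine Finset.sum_congr rfl fun i _ => ?_
  split_ifs <;> omega

lemma card_fin_lt (a : ℕ) (h : a ≤ n) :
    (univ.filter fun i : Fin n => (i : ℕ) < a).card = a := by
  rw [Fin.card_filter_val_lt]; omega

lemma sum_wt (a b : ℕ) (h : a + b ≤ n) : ∑ i : Fin n, wt n a b i = (a : ℤ) - b := by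
  have h1 : ∀ i : Fin n, wt n a b i =
      2 * (if (i : ℕ) < a then 1 else 0) - (if (i : ℕ) < a + b then 1 else 0) := by
    intro i
    unfold wt
    split_ifs <;> omega
  simp_rw [h1]
  rw [Finset.sum_sub_distrib, ← Finset.mul_sum, Finset.sum_boole, Finset.sum_boole,
    card_fin_lt a (by omega), card_fin_lt (a + b) h]
  push_cast
  ring

lemma D_mul_swap (a b : ℕ) (σ : Equiv.Perm (Fin n)) (p i : Fin n) :
    D n a b (σ * Equiv.swap p i) =
      D n a b σ + (wt n a b p - wt n a b i) * ((σ i : ℕ) - (σ p : ℕ) : ℤ) := by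
  rcases eq_or_ne p i with rfl | hpi
  · simp [← Equiv.Perm.one_def]
  rw [← sub_eq_iff_eq_add', D_eq_sum, D_eq_sum, ← Finset.sum_sub_distrib,
    Fintype.sum_eq_add p i hpi]
  · simp
    ring
  · rintro x ⟨h1, h2⟩
    simp [Equiv.swap_apply_of_ne_of_ne h1 h2]

/-! ### Reflection and rotation of the values -/

/-- In terms of `{1, …, n}`, the reflection `u ↦ n - u` for `u < n`, fixing `n`. -/
lemma exists_reflection (hn : 0 < n) : ∃ τ : Equiv.Perm (Fin n), ∀ v : Fin n,
    ((τ v : ℕ) + 1 : ℤ) = n - ((v : ℕ) + 1) + if v = ⟨n - 1, by omega⟩ then (n : ℤ) else 0 := by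
  let f : Fin n → Fin n := fun v =>
    if h : (v : ℕ) = n - 1 then v else ⟨n - 2 - v, by omega⟩
  have hf : Function.Involutive f := by
    intro v
    have := v.2
    ext
    simp only [f]
    split_ifs <;> simp at * <;> omega
  refine ⟨hf.toPerm, fun v => ?_⟩
  have := v.2
  simp only [Function.Involutive.coe_toPerm, f, Fin.ext_iff]
  split_ifs <;> (try simp only []) <;> omega

lemma two_mul_card_zero_le (a b : ℕ) (hab : b + 3 ≤ a) (habn : a + b < n) :
    2 * (univ.filter fun σ : Equiv.Perm (Fin n) => D n a b σ = 0).card ≤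
      (univ.filter fun σ : Equiv.Perm (Fin n) => (n : ℤ) ∣ D n a b σ).card := by
  have hn : 0 < n := by omega
  obtain ⟨τ, hτ⟩ := exists_reflection hn
  set Z := univ.filter fun σ : Equiv.Perm (Fin n) => D n a b σ = 0 with hZ
  have key : ∀ σ ∈ Z, D n a b (τ * σ) =
      n * ((a : ℤ) - b + wt n a b (σ.symm ⟨n - 1, by omega⟩)) := by
    intro σ hσ
    have h0 : D n a b σ = 0 := by simpa [hZ] using hσ
    rw [D_eq_sum] at h0 ⊢
    simp_rw [Equiv.Perm.mul_apply, hτ, mul_add, mul_sub, Finset.sum_add_distrib,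
      Finset.sum_sub_distrib]
    rw [← Finset.sum_mul, sum_wt a b habn.le]
    have h2 : ∑ i, wt n a b i * (if σ i = ⟨n - 1, by omega⟩ then (n : ℤ) else 0) =
        n * wt n a b (σ.symm ⟨n - 1, by omega⟩) := by
      rw [Finset.sum_eq_single (σ.symm ⟨n - 1, by omega⟩)]
      · simp [mul_comm]
      · intro i _ hi
        rw [if_neg, mul_zero]
        intro h
        exact hi (by simp [← h])
      · simp
    rw [h2, h0]
    ring
  have hdisj : Disjoint Z (Z.image fun σ => τ * σ) := by
    rw [Finset.disjoint_left]
    intro σ hσ hσ'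
    obtain ⟨ρ, hρ, rfl⟩ := Finset.mem_image.1 hσ'
    have h0 : D n a b (τ * ρ) = 0 := by simpa [hZ] using hσ
    rw [key ρ hρ] at h0
    have hw : -1 ≤ wt n a b (ρ.symm ⟨n - 1, by omega⟩) := by
      unfold wt; split_ifs <;> omega
    rcases mul_eq_zero.1 h0 with h | h <;> omega
  calc 2 * Z.card = (Z ∪ Z.image fun σ => τ * σ).card := by
        rw [Finset.card_union_of_disjoint hdisj,
          Finset.card_image_of_injective _ (mul_right_injective τ)]
        ring
    _ ≤ _ := by
        refine Finset.card_le_card fun σ hσ => ?_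
        rw [Finset.mem_filter]
        refine ⟨mem_univ _, ?_⟩
        rcases Finset.mem_union.1 hσ with h | h
        · have h0 : D n a b σ = 0 := by simpa [hZ] using h
          simp [h0]
        · obtain ⟨ρ, hρ, rfl⟩ := Finset.mem_image.1 h
          rw [key ρ hρ]
          exact dvd_mul_right _ _

lemma exists_rotation (hn : 0 < n) (k : ℕ) : ∃ τ : Equiv.Perm (Fin n), ∀ v : Fin n,
    (n : ℤ) ∣ (τ v : ℕ) - ((v : ℕ) + k : ℤ) := by
  have : NeZero n := ⟨hn.ne'⟩
  refine ⟨Equiv.addRight (Fin.ofNat n k), fun v => ?_⟩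
  rw [← Int.modEq_iff_dvd]
  have h : ((v + Fin.ofNat n k : Fin n) : ℕ) ≡ v + k [MOD n] := by
    simp [Fin.val_add, Nat.ModEq]
  have := (Int.natCast_modEq_iff.2 h).symm
  push_cast at this
  simpa using this

lemma mul_card_dvd_le (a b : ℕ) (hn : 0 < n) (h : b ≤ a) (habn : a + b ≤ n) (g L : ℕ)
    (hg : g = Nat.gcd (a - b) n) (hL : n = g * L) :
    L * (univ.filter fun σ : Equiv.Perm (Fin n) => (n : ℤ) ∣ D n a b σ).card ≤
      (univ.filter fun σ : Equiv.Perm (Fin n) => (g : ℤ) ∣ D n a b σ).card := by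
  have hg0 : 0 < g := Nat.pos_of_ne_zero (by rintro rfl; simp at hL; omega)
  -- A multiplier `x` with `(a - b) x ≡ g` modulo `n`.
  obtain ⟨x, hx⟩ : ∃ x : ℕ, (n : ℤ) ∣ ((a : ℤ) - b) * x - g := by
    have hb := Nat.gcd_eq_gcd_ab (a - b) n
    rw [← hg, Nat.cast_sub h] at hb
    refine ⟨(Nat.gcdA (a - b) n % n).toNat, ?_⟩
    rw [Int.toNat_of_nonneg (Int.emod_nonneg _ (by omega)), Int.emod_def, hb]
    refine ⟨-(((a : ℤ) - b) * ((a - b).gcdA n / n)) - (a - b).gcdB n, by ring⟩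
  choose τ hτ using fun j : ℕ => exists_rotation hn (x * j)
  have key : ∀ (j : ℕ) (σ : Equiv.Perm (Fin n)), (n : ℤ) ∣ D n a b σ →
      (n : ℤ) ∣ D n a b (τ j * σ) - g * j := by
    intro j σ hσ
    have h1 : (n : ℤ) ∣ D n a b (τ j * σ) - D n a b σ - ((a : ℤ) - b) * (x * j) := by
      rw [← sum_wt a b habn, D_eq_sum, D_eq_sum, Finset.sum_mul, ← Finset.sum_sub_distrib,
        ← Finset.sum_sub_distrib]
      refine Finset.dvd_sum fun i _ => ?_
      have := (hτ j (σ i)).mul_left (wt n a b i)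
      convert this using 1
      simp
      ring
    have h2 := (h1.add hσ).add (hx.mul_right (j : ℤ))
    rwa [show D n a b (τ j * σ) - g * j = D n a b (τ j * σ) - D n a b σ - ((a : ℤ) - b) * (x * j)
      + D n a b σ + (((a : ℤ) - b) * x - g) * j by ring]
  calc _ = ((range L) ×ˢ
        (univ.filter fun σ : Equiv.Perm (Fin n) => (n : ℤ) ∣ D n a b σ)).card := by simp
    _ ≤ _ := by
      refine Finset.card_le_card_of_injOn (fun q => τ q.1 * q.2) ?_ ?_
      · rintro ⟨j, σ⟩ hq
        simp at hq
        have hgn : (g : ℤ) ∣ n := ⟨L, by exact_mod_cast hL⟩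
        have := hgn.trans (key j σ hq.2)
        simpa using (dvd_sub_left (Dvd.intro _ rfl)).1 this
      · rintro ⟨j, σ⟩ hq ⟨j', σ'⟩ hq' heq
        simp at hq hq' heq
        have h1 := key j σ hq.2
        have h2 := key j' σ' hq'.2
        rw [← heq] at h2
        have h3 := h2.sub h1
        have h4 : (g : ℤ) * L ∣ g * ((j : ℤ) - j') := by
          rw [← Nat.cast_mul, ← hL]
          rwa [show (g : ℤ) * ((j : ℤ) - j') = D n a b (τ j * σ) - g * j' -
            (D n a b (τ j * σ) - g * j) by ring]
        have h5 := Int.dvd_of_mul_dvd_mul_left (by exact_mod_cast hg0.ne') h4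
        have h6 : (j : ℤ) - j' = 0 := by
          refine Int.eq_zero_of_abs_lt_dvd h5 ?_
          rw [abs_lt]; omega
        obtain rfl : j = j' := by omega
        simpa using heq

/-! ### Residues of the values modulo a divisor of `n` -/

lemma card_residue_le (g L : ℕ) (hL : n = g * L) (σ : Equiv.Perm (Fin n))
    (r : ZMod g) : (univ.filter fun i : Fin n => ((σ i : ℕ) : ZMod g) = r).card ≤ L := by
  rw [← Finset.card_range L]
  refine Finset.card_le_card_of_injOn (fun i => (σ i : ℕ) / g) ?_ ?_
  · intro i _
    simp only [Finset.coe_range, Set.mem_Iio]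
    exact Nat.div_lt_of_lt_mul (hL ▸ (σ i).2)
  · intro i hi j hj hij
    simp at hi hj hij
    have h1 : (σ i : ℕ) % g = (σ j : ℕ) % g :=
      (ZMod.natCast_eq_natCast_iff' _ _ _).1 (hi.trans hj.symm)
    have h2 : (σ i : ℕ) = σ j := by
      rw [← Nat.div_add_mod (σ i : ℕ) g, ← Nat.div_add_mod (σ j : ℕ) g, h1, hij]
    exact σ.injective (Fin.ext h2)

/-- Two distinct positions carry congruent values with probability at most `1/g`. -/
lemma card_collision_le (g L : ℕ) (hL : n = g * L) (hg : 0 < g) (i i' : Fin n) (hi : i ≠ i') :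
    g * (univ.filter fun σ : Equiv.Perm (Fin n) =>
      ((σ i : ℕ) : ZMod g) = ((σ i' : ℕ) : ZMod g)).card ≤ n.factorial := by
  set K := (univ.filter fun σ : Equiv.Perm (Fin n) =>
      ((σ i : ℕ) : ZMod g) = ((σ i' : ℕ) : ZMod g)).card with hK
  have hn1 : 2 ≤ n := by
    have := i.2; have := i'.2
    have : (i : ℕ) ≠ i' := fun h => hi (Fin.ext h)
    omega
  have hsame : ∀ j ∈ univ.erase i, (univ.filter fun σ : Equiv.Perm (Fin n) =>
      ((σ i : ℕ) : ZMod g) = ((σ j : ℕ) : ZMod g)).card = K := by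
    intro j hj
    have hj : j ≠ i := by simpa using hj
    refine Finset.card_equiv (Equiv.mulRight (Equiv.swap i' j)) fun σ => ?_
    simp [Equiv.swap_apply_of_ne_of_ne hi hj.symm]
  have h1 : (n - 1) * K ≤ (L - 1) * n.factorial := by
    calc (n - 1) * K = ∑ j ∈ univ.erase i, (univ.filter fun σ : Equiv.Perm (Fin n) =>
            ((σ i : ℕ) : ZMod g) = ((σ j : ℕ) : ZMod g)).card := by
          rw [Finset.sum_congr rfl hsame]; simp
      _ = ∑ σ : Equiv.Perm (Fin n), ((univ.erase i).filter fun j =>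
            ((σ i : ℕ) : ZMod g) = ((σ j : ℕ) : ZMod g)).card := by
          simp_rw [Finset.card_filter]
          rw [Finset.sum_comm]
      _ ≤ ∑ σ : Equiv.Perm (Fin n), (L - 1) := by
          refine Finset.sum_le_sum fun σ _ => ?_
          rw [Finset.filter_erase, Finset.card_erase_of_mem (by simp)]
          have := card_residue_le g L hL σ ((σ i : ℕ) : ZMod g)
          simp_rw [eq_comm (a := ((σ i : ℕ) : ZMod g))]
          omega
      _ = _ := by simp [Fintype.card_perm, mul_comm]
  have hL0 : 1 ≤ L := Nat.one_le_iff_ne_zero.2 (by rintro rfl; simp at hL; omega)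
  have h2 : g * (L - 1) ≤ n - 1 := by
    rw [Nat.mul_sub, ← hL]; omega
  refine Nat.le_of_mul_le_mul_left (c := n - 1) ?_ (by omega)
  calc (n - 1) * (g * K) = g * ((n - 1) * K) := by ring
    _ ≤ g * ((L - 1) * n.factorial) := Nat.mul_le_mul_left _ h1
    _ = (g * (L - 1)) * n.factorial := by ring
    _ ≤ _ := Nat.mul_le_mul_right _ h2

/-- The number of positions in `S` whose value has residue `r` modulo `g`. -/
def mult (g : ℕ) (S : Finset (Fin n)) (σ : Equiv.Perm (Fin n)) (r : ZMod g) : ℕ :=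
  (S.filter fun i => ((σ i : ℕ) : ZMod g) = r).card

lemma sum_mult_sq (g : ℕ) [NeZero g] (S : Finset (Fin n)) (σ : Equiv.Perm (Fin n)) :
    ∑ r, mult g S σ r ^ 2 = ∑ i ∈ S, ∑ i' ∈ S,
      if ((σ i : ℕ) : ZMod g) = ((σ i' : ℕ) : ZMod g) then 1 else 0 := by
  simp_rw [mult, sq, Finset.card_filter, Finset.sum_mul_sum]
  rw [Finset.sum_comm]
  refine Finset.sum_congr rfl fun i _ => ?_
  rw [Finset.sum_comm]
  refine Finset.sum_congr rfl fun i' _ => ?_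
  simp [eq_comm]

/-- The average number of collisions in a pool `S` of size `s` is at most `s + s (s - 1) / g`. -/
lemma sum_sum_mult_sq_le (g L : ℕ) [NeZero g] (hL : n = g * L) (S : Finset (Fin n)) :
    (g : ℚ) * ∑ σ : Equiv.Perm (Fin n), ∑ r, (mult g S σ r : ℚ) ^ 2 ≤
      n.factorial * (g * S.card + S.card * (S.card - 1)) := by
  have h1 : ∑ σ : Equiv.Perm (Fin n), ∑ r, (mult g S σ r : ℚ) ^ 2 =
      ∑ i ∈ S, ∑ i' ∈ S, ((univ.filter fun σ : Equiv.Perm (Fin n) =>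
      ((σ i : ℕ) : ZMod g) = ((σ i' : ℕ) : ZMod g)).card : ℚ) := by
    have : ∑ σ : Equiv.Perm (Fin n), ∑ r, mult g S σ r ^ 2 =
      ∑ i ∈ S, ∑ i' ∈ S, (univ.filter fun σ : Equiv.Perm (Fin n) =>
      ((σ i : ℕ) : ZMod g) = ((σ i' : ℕ) : ZMod g)).card := by
      simp_rw [sum_mult_sq, Finset.card_filter]
      rw [Finset.sum_comm]
      refine Finset.sum_congr rfl fun i _ => ?_
      rw [Finset.sum_comm]
    exact_mod_cast this
  rw [h1, Finset.mul_sum]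
  calc _ ≤ ∑ i ∈ S, (n.factorial : ℚ) * (g + (S.card - 1)) := by
        refine Finset.sum_le_sum fun i hi => ?_
        rw [← Finset.add_sum_erase _ _ hi, mul_add, mul_add, Finset.mul_sum]
        refine add_le_add ?_ ?_
        · simp [Fintype.card_perm, mul_comm]
        · calc _ ≤ ∑ i' ∈ S.erase i, (n.factorial : ℚ) := by
                refine Finset.sum_le_sum fun i' hi' => ?_
                exact_mod_cast card_collision_le g L hL (NeZero.pos g) i i'
                  (Finset.ne_of_mem_erase hi').symm
            _ = _ := by
                rw [Finset.sum_const, Finset.card_erase_of_mem hi, nsmul_eq_mul,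
                  Nat.cast_sub (Finset.card_pos.2 ⟨i, hi⟩)]
                push_cast
                ring
    _ = _ := by
        rw [Finset.sum_const, nsmul_eq_mul]; ring

/-! ### The probability that `g` divides `D` -/

lemma succ_mul_card_dvd_le (a b g L : ℕ) (habn : a + b < n) (hL : n = g * L) :
    (a + 1) * (univ.filter fun σ : Equiv.Perm (Fin n) => (g : ℤ) ∣ D n a b σ).card ≤
      L * n.factorial := by
  set p : Fin n := ⟨a + b, habn⟩ with hp
  set A := univ.filter fun i : Fin n => (i : ℕ) < a with hA
  have hpA : p ∉ A := by simp [hA, hp]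
  have hS : (insert p A).card = a + 1 := by
    rw [Finset.card_insert_of_notMem hpA, hA, card_fin_lt a (by omega)]
  have hD : ∀ (σ : Equiv.Perm (Fin n)), ∀ i ∈ insert p A,
      D n a b (σ * Equiv.swap p i) = D n a b σ + (σ p : ℕ) - (σ i : ℕ) := by
    intro σ i hi
    rw [D_mul_swap]
    rcases Finset.mem_insert.1 hi with rfl | hi
    · simp
    · have h1 : wt n a b p = 0 := by simp [wt, hp]
      have h2 : wt n a b i = 1 := by
        have : (i : ℕ) < a := by simpa [hA] using hi
        simp [wt, this]
      rw [h1, h2]; ring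
  calc _ = ∑ i ∈ insert p A, (univ.filter fun σ : Equiv.Perm (Fin n) =>
          (g : ℤ) ∣ D n a b (σ * Equiv.swap p i)).card := by
        rw [← hS, ← smul_eq_mul, ← Finset.sum_const]
        refine Finset.sum_congr rfl fun i _ => Eq.symm ?_
        exact Finset.card_equiv (Equiv.mulRight (Equiv.swap p i)) fun σ => by simp
    _ = ∑ σ : Equiv.Perm (Fin n), ((insert p A).filter fun i =>
          (g : ℤ) ∣ D n a b (σ * Equiv.swap p i)).card := by
        simp_rw [Finset.card_filter]
        rw [Finset.sum_comm]
    _ ≤ ∑ σ : Equiv.Perm (Fin n), L := by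
        refine Finset.sum_le_sum fun σ _ => ?_
        refine le_trans (Finset.card_le_card fun i hi => ?_)
          (card_residue_le g L hL σ ((D n a b σ + (σ p : ℕ) : ℤ) : ZMod g))
        obtain ⟨hi1, hi2⟩ := Finset.mem_filter.1 hi
        rw [hD σ i hi1, ← ZMod.intCast_zmod_eq_zero_iff_dvd] at hi2
        push_cast at hi2
        simp only [Finset.mem_filter, Finset.mem_univ, true_and]
        push_cast
        exact (sub_eq_zero.1 hi2).symm
    _ = _ := by simp [Fintype.card_perm, mul_comm]

/-- The number of solutions of a congruence `σ i + σ j ≡ r` with `i`, `j` in two pools is at most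
the mean of the numbers of collisions, after normalising by the sizes of the pools. -/
lemma card_pairs_le (g : ℕ) [NeZero g] (S T : Finset (Fin n)) (hS : 0 < S.card)
    (hT : 0 < T.card) (σ : Equiv.Perm (Fin n)) (r : ZMod g) :
    2 * (((S ×ˢ T).filter fun q => ((σ q.1 : ℕ) : ZMod g) + ((σ q.2 : ℕ) : ZMod g) = r).card : ℚ)
        / (S.card * T.card) ≤
      (∑ ρ, (mult g S σ ρ : ℚ) ^ 2) / S.card ^ 2 + (∑ ρ, (mult g T σ ρ : ℚ) ^ 2) / T.card ^ 2 := by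
  have h1 : (((S ×ˢ T).filter fun q =>
      ((σ q.1 : ℕ) : ZMod g) + ((σ q.2 : ℕ) : ZMod g) = r).card : ℚ) =
      ∑ ρ, (mult g S σ ρ : ℚ) * mult g T σ (r - ρ) := by
    rw [Finset.card_eq_sum_card_fiberwise (f := fun q => ((σ q.1 : ℕ) : ZMod g)) (t := univ)
      (by intro x _; simp)]
    push_cast
    refine Finset.sum_congr rfl fun ρ _ => ?_
    rw [mult, mult, ← Nat.cast_mul, ← Finset.card_product, Finset.filter_filter]
    congr 2
    ext ⟨i, j⟩
    simp only [Finset.mem_filter, Finset.mem_product]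
    constructor
    · rintro ⟨⟨hi, hj⟩, h2, h3⟩
      exact ⟨⟨hi, h3⟩, hj, by rw [← h2, ← h3]; ring⟩
    · rintro ⟨⟨hi, h3⟩, hj, h2⟩
      exact ⟨⟨hi, hj⟩, by rw [h2, h3]; ring, h3⟩
  have h2 : ∑ ρ, (mult g T σ ρ : ℚ) ^ 2 = ∑ ρ, (mult g T σ (r - ρ) : ℚ) ^ 2 :=
    (Equiv.sum_comp (Equiv.subLeft r) fun ρ => (mult g T σ ρ : ℚ) ^ 2).symm
  rw [h1, h2, Finset.mul_sum, Finset.sum_div, Finset.sum_div, Finset.sum_div,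
    ← Finset.sum_add_distrib]
  refine Finset.sum_le_sum fun ρ _ => ?_
  have := two_mul_le_add_sq ((mult g S σ ρ : ℚ) / S.card) ((mult g T σ (r - ρ) : ℚ) / T.card)
  rw [div_pow, div_pow] at this
  refine le_trans (le_of_eq ?_) this
  field_simp

/-- Two simultaneous random exchanges: the position `a + b` (weight `0`) with one from the `a`
positions of weight `1`, and the position `a` (weight `-1`) with one from the remaining positions
of weight `0`. -/
lemma card_dvd_le_of_pools (a b g L : ℕ) [NeZero g] (hb : 1 ≤ b) (habn : a + b < n)
    (hL : n = g * L) (hs : g + 2 ≤ a + 1) (ht : g + 2 ≤ n - a - b) :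
    ((univ.filter fun σ : Equiv.Perm (Fin n) => (g : ℤ) ∣ D n a b σ).card : ℚ) ≤
      n.factorial * ((2 * g + 1) / (g * (g + 2))) := by
  set G := (univ.filter fun σ : Equiv.Perm (Fin n) => (g : ℤ) ∣ D n a b σ).card with hG
  set p : Fin n := ⟨a + b, habn⟩ with hp
  set y : Fin n := ⟨a, by omega⟩ with hy
  set A := univ.filter fun i : Fin n => (i : ℕ) < a with hA
  set C := univ.filter fun i : Fin n => ¬ (i : ℕ) < a + b + 1 with hC
  have hpA : p ∉ A := by simp [hA, hp]
  have hyC : y ∉ C := by simp [hC, hy]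
  set S := insert p A with hSdef
  set T := insert y C with hTdef
  have hS : S.card = a + 1 := by
    rw [hSdef, Finset.card_insert_of_notMem hpA, hA, card_fin_lt a (by omega)]
  have hT : T.card = n - a - b := by
    have h1 := card_fin_lt (n := n) (a + b + 1) (by omega)
    have h2 := Finset.card_filter_add_card_filter_not (s := (univ : Finset (Fin n)))
      (fun i : Fin n => (i : ℕ) < a + b + 1)
    rw [Finset.card_univ, Fintype.card_fin] at h2
    rw [hTdef, Finset.card_insert_of_notMem hyC, hC]
    omega
  have hST : ∀ i ∈ S, ∀ j ∈ T, i ≠ j ∧ y ≠ i ∧ p ≠ j := by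
    intro i hi j hj
    simp only [hSdef, hTdef, Finset.mem_insert, hA, hC, Finset.mem_filter, Finset.mem_univ,
      true_and, hp, hy, Fin.ext_iff, ne_eq] at hi hj ⊢
    omega
  have hyp : y ≠ p := by simp [hy, hp, Fin.ext_iff]; omega
  have hD : ∀ (σ : Equiv.Perm (Fin n)), ∀ i ∈ S, ∀ j ∈ T,
      D n a b (σ * Equiv.swap p i * Equiv.swap y j) =
        D n a b σ + (σ p : ℕ) + (σ y : ℕ) - ((σ i : ℕ) + (σ j : ℕ)) := by
    intro σ i hi j hj
    obtain ⟨h1, h2, h3⟩ := hST i hi j hj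
    rw [D_mul_swap, D_mul_swap, Equiv.Perm.mul_apply, Equiv.Perm.mul_apply,
      Equiv.swap_apply_of_ne_of_ne h3.symm h1.symm, Equiv.swap_apply_of_ne_of_ne hyp h2]
    have hwp : wt n a b p = 0 := by simp [wt, hp]
    have hwy : wt n a b y = -1 := by simp [wt, hy]; omega
    have e1 : (wt n a b p - wt n a b i) * ((σ i : ℕ) - (σ p : ℕ) : ℤ) =
        (σ p : ℕ) - (σ i : ℕ) := by
      rcases Finset.mem_insert.1 hi with rfl | hi
      · simp
      · have hwi : wt n a b i = 1 := by
          have : (i : ℕ) < a := by simpa [hA] using hi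
          simp [wt, this]
        rw [hwp, hwi]; ring
    have e2 : (wt n a b y - wt n a b j) * ((σ j : ℕ) - (σ y : ℕ) : ℤ) =
        (σ y : ℕ) - (σ j : ℕ) := by
      rcases Finset.mem_insert.1 hj with rfl | hj
      · simp
      · have hwj : wt n a b j = 0 := by
          have : a + b + 1 ≤ (j : ℕ) := by simpa [hC] using hj
          unfold wt
          rw [if_neg (by omega), if_neg (by omega)]
        rw [hwy, hwj]; ring
    rw [e1, e2]; ring
  have hcount : S.card * T.card * G = ∑ σ : Equiv.Perm (Fin n), ((S ×ˢ T).filter fun q =>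
      ((σ q.1 : ℕ) : ZMod g) + ((σ q.2 : ℕ) : ZMod g) =
        ((D n a b σ + (σ p : ℕ) + (σ y : ℕ) : ℤ) : ZMod g)).card := by
    calc S.card * T.card * G = ∑ q ∈ S ×ˢ T, (univ.filter fun σ : Equiv.Perm (Fin n) =>
          (g : ℤ) ∣ D n a b (σ * Equiv.swap p q.1 * Equiv.swap y q.2)).card := by
          rw [← Finset.card_product, ← smul_eq_mul, ← Finset.sum_const]
          refine Finset.sum_congr rfl fun q _ => Eq.symm ?_
          exact Finset.card_equiv (Equiv.mulRight (Equiv.swap p q.1 * Equiv.swap y q.2))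
            fun σ => by simp [mul_assoc]
      _ = ∑ σ : Equiv.Perm (Fin n), ((S ×ˢ T).filter fun q =>
          (g : ℤ) ∣ D n a b (σ * Equiv.swap p q.1 * Equiv.swap y q.2)).card := by
          simp_rw [Finset.card_filter]
          rw [Finset.sum_comm]
      _ = _ := by
          refine Finset.sum_congr rfl fun σ _ => ?_
          congr 1
          refine Finset.filter_congr fun q hq => ?_
          obtain ⟨hi, hj⟩ := Finset.mem_product.1 hq
          rw [hD σ _ hi _ hj, ← ZMod.intCast_zmod_eq_zero_iff_dvd]
          push_cast
          rw [sub_eq_zero, eq_comm]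
  have hg : (0 : ℚ) < g := by exact_mod_cast NeZero.pos g
  have hpool : ∀ U : Finset (Fin n), g + 2 ≤ U.card →
      (∑ σ : Equiv.Perm (Fin n), ∑ ρ, (mult g U σ ρ : ℚ) ^ 2) / U.card ^ 2 ≤
        n.factorial * ((2 * g + 1) / (g * (g + 2))) := by
    intro U hU
    have hU' : (g : ℚ) + 2 ≤ U.card := by exact_mod_cast hU
    have hg1 : (1 : ℚ) ≤ g := by exact_mod_cast NeZero.pos g
    have h1 := sum_sum_mult_sq_le g L hL U
    rw [mul_comm, ← le_div_iff₀ hg] at h1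
    have hU0 : (0 : ℚ) < U.card := by linarith
    rw [div_le_iff₀ (by positivity)]
    refine h1.trans ?_
    rw [mul_div_assoc, mul_assoc]
    refine mul_le_mul_of_nonneg_left ?_ (by positivity)
    rw [div_mul_eq_mul_div, div_le_div_iff₀ hg (by positivity)]
    have : 0 ≤ (U.card : ℚ) * g * (g - 1) * (U.card - (g + 2)) := by
      apply mul_nonneg (mul_nonneg (by positivity) (by linarith)) (by linarith)
    nlinarith
  have hS0 : 0 < S.card := by omega
  have hT0 : 0 < T.card := by omega
  have hsum : 2 * (G : ℚ) ≤
      (∑ σ : Equiv.Perm (Fin n), ∑ ρ, (mult g S σ ρ : ℚ) ^ 2) / S.card ^ 2 +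
      (∑ σ : Equiv.Perm (Fin n), ∑ ρ, (mult g T σ ρ : ℚ) ^ 2) / T.card ^ 2 := by
    have hSq : (0 : ℚ) < S.card := by exact_mod_cast hS0
    have hTq : (0 : ℚ) < T.card := by exact_mod_cast hT0
    calc 2 * (G : ℚ) = 2 * ((S.card * T.card * G : ℕ) : ℚ) / (S.card * T.card) := by
          push_cast; field_simp
      _ ≤ _ := by
          rw [hcount, Nat.cast_sum, Finset.mul_sum, Finset.sum_div, Finset.sum_div,
            Finset.sum_div, ← Finset.sum_add_distrib]
          exact Finset.sum_le_sum fun σ _ => card_pairs_le g S T hS0 hT0 σ _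
  have h1 := hpool S (by omega)
  have h2 := hpool T (by omega)
  linarith

lemma card_gcd_dvd_le (a b g L : ℕ) (hb : 1 ≤ b) (hab : b + 3 ≤ a) (habn : a + b < n)
    (hg : g = Nat.gcd (a - b) n) (hL : n = g * L) :
    ((univ.filter fun σ : Equiv.Perm (Fin n) => (g : ℤ) ∣ D n a b σ).card : ℚ) * (2 * n + 1) ≤
      4 * L * n.factorial := by
  have hg0 : 0 < g := Nat.pos_of_ne_zero (by rintro rfl; simp at hL; omega)
  have hgd : g ≤ a - b := by
    rw [hg]; exact Nat.gcd_le_left _ (by omega)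
  by_cases hcase : n ≤ 2 * a + 1
  · have h1 : ((a : ℚ) + 1) *
        (univ.filter fun σ : Equiv.Perm (Fin n) => (g : ℤ) ∣ D n a b σ).card ≤
        L * n.factorial := by
      exact_mod_cast succ_mul_card_dvd_le a b g L habn hL
    have h2 : (2 * n + 1 : ℚ) ≤ 4 * (a + 1) := by
      have : 2 * n + 1 ≤ 4 * (a + 1) := by omega
      exact_mod_cast this
    have h3 := mul_le_mul_of_nonneg_left h2 (Nat.cast_nonneg (α := ℚ)
      (univ.filter fun σ : Equiv.Perm (Fin n) => (g : ℤ) ∣ D n a b σ).card)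
    linarith
  · have : NeZero g := ⟨hg0.ne'⟩
    have h1 := card_dvd_le_of_pools a b g L hb habn hL (by omega) (by omega)
    refine (mul_le_mul_of_nonneg_right h1 (by positivity)).trans ?_
    have hgn : (g : ℚ) ≤ n := by
      have : g ≤ n := by omega
      exact_mod_cast this
    have hg1 : (1 : ℚ) ≤ g := by exact_mod_cast hg0
    have hLq : (n : ℚ) = g * L := by exact_mod_cast hL
    have h2 : (2 * (g : ℚ) + 1) / (g * (g + 2)) * (2 * n + 1) ≤ 4 * L := by
      rw [div_mul_eq_mul_div, div_le_iff₀ (by positivity)]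
      have : 4 * (L : ℚ) * (g * (g + 2)) = 4 * n * (g + 2) := by rw [hLq]; ring
      rw [this]
      nlinarith
    have h3 := mul_le_mul_of_nonneg_left h2 (Nat.cast_nonneg (α := ℚ) n.factorial)
    linarith

end BigDiff

/-- For `a ≥ b + 3`, `b ≥ 1`, `a + b < n`, a uniformly random permutation `σ` of
`{1,…,n}` satisfies `D_{a,b}(σ) = 0` with probability at most
`1/(n + 1/2) = 1/n − 1/(n(2n+1))`. -/
theorem prob_D_bigdiff (a b n : ℕ) (hb : 1 ≤ b) (hab : b + 3 ≤ a) (habn : a + b < n) :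
    ((Finset.univ.filter
        (fun σ : Equiv.Perm (Fin n) => D n a b σ = 0)).card : ℚ)
      / (Nat.factorial n : ℚ) ≤ 1 / ((n : ℚ) + 1 / 2) := by
  obtain ⟨L, hL⟩ := Nat.gcd_dvd_right (a - b) n
  have h1 := BigDiff.two_mul_card_zero_le a b hab habn
  have h2 := BigDiff.mul_card_dvd_le a b (by omega) (by omega) habn.le _ L rfl hL
  have h3 := BigDiff.card_gcd_dvd_le a b _ L hb hab habn rfl hL
  set g := Nat.gcd (a - b) n
  have hL0 : 0 < L := Nat.pos_of_ne_zero (by rintro rfl; simp at hL; omega)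
  have h4 := (Nat.mul_le_mul_left L h1).trans h2
  set Z := (Finset.univ.filter (fun σ : Equiv.Perm (Fin n) => D n a b σ = 0)).card
  have h5 : (L : ℚ) * (2 * Z) * (2 * n + 1) ≤ 4 * L * n.factorial := by
    refine le_trans (mul_le_mul_of_nonneg_right ?_ (by positivity)) h3
    exact_mod_cast h4
  have hLq : (0 : ℚ) < L := by exact_mod_cast hL0
  rw [div_le_div_iff₀ (by positivity) (by positivity)]
  have h6 : (L : ℚ) * (Z * (n + 1 / 2)) ≤ L * (1 * n.factorial) := by linarith
  exact le_of_mul_le_mul_left h6 hLq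
end

section
/- Let k and n be positive integers, and let a, b be positive integers with b ∈ {a−2, a−1} and a + b < n. If σ is a uniformly random bijection from {1,…,n} to {k, k+1, …, n+k−1}, then the probability that D_{a,b}(σ) = 0 is strictly less than 1/n, where D_{a,b}(σ) = (σ(1)+⋯+σ(a)) − (σ(a+1)+⋯+σ(a+b)). -/
/-!
Shifting all values of `σ` cyclically by `c : Fin n` changes `Dk` by `(a - b) c` modulo `n`.
Averaging over the shifts (`sum_zeros`), the claim says that a shift orbit, counted with its
parameter `c`, contains on average fewer than one zero of `Dk`.

If `a - b` is prime to `n`, an orbit contains at most one zero (`zeros_le_one`), and explicit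
orbits contain none (`exists_no_zeros_one`, `exists_no_zeros_two`).

There remains `a = b + 2` with `n` even. An orbit on which `Dk` is odd has no zero. An orbit on
which it is even has at most two, at shifts differing by `n / 2`, and if there are two, then an odd
number of the `2 (b + 1)` used values lies in the upper half `{n/2, …, n-1}` (`odd_upper`). The
excess of even over odd permutations is `(-1) ^ (b + 1)` times the number of `σ` whose used set is
closed under the antipodal map `x ↦ x + n / 2`: replace the parity of a value by the half it lies
in, which is also a balanced two-colouring (`sum_weight_parity`), and cancel the permutations with
an unmatched antipodal pair by swapping that pair (`sum_weight_halfSign`). If `b + 1` is odd,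
the even permutations are thus a strict minority and the bound `2` per even orbit suffices. If
`b + 1` is even, the excess consists of closed permutations; these use `b + 1` upper values, an
even number, so their orbits contain at most one zero (`zeros_le_one_of_closed`), which
compensates the excess exactly. Strictness again comes from an orbit without zeros.
-/

/-- `Dk n k a b σ = (σ(1)+⋯+σ(a)) − (σ(a+1)+⋯+σ(a+b))` for a bijection `σ` from
`{1,…,n}` to `{k,…,n+k−1}`, modelled as a permutation of `Fin n` with the value at
position `i` equal to `σ i + k ∈ {k,…,n+k−1}`. -/
def Dk (n k a b : ℕ) (σ : Equiv.Perm (Fin n)) : ℤ :=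
  (∑ i ∈ Finset.univ.filter (fun i : Fin n => (i : ℕ) < a), ((σ i : ℕ) + k : ℤ))
    - ∑ i ∈ Finset.univ.filter (fun i : Fin n => a ≤ (i : ℕ) ∧ (i : ℕ) < a + b),
        ((σ i : ℕ) + k : ℤ)

/-! ### Signs, shifts and orbits -/

/-- The sign with which position `i` enters `Dk`: `1` on the first block, `-1` on the second,
`0` on the unused positions. -/
def sgn (a b i : ℕ) : ℤ := if i < a then 1 else if i < a + b then -1 else 0

lemma Dk_eq (n k a b : ℕ) (σ : Equiv.Perm (Fin n)) :
    Dk n k a b σ = ∑ i : Fin n, sgn a b i * ((σ i : ℕ) + k : ℤ) := by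
  unfold Dk
  rw [Finset.sum_filter, Finset.sum_filter, ← Finset.sum_sub_distrib]
  refine Finset.sum_congr rfl fun i _ => ?_
  unfold sgn
  split_ifs <;> omega

lemma sum_blocks (n a b : ℕ) (hab : a + b < n) (σ : Fin n → ℤ) (v : ℕ → ℤ)
    (hv : ∀ i : Fin n, (i : ℕ) < a + b → σ i = v i) :
    ∑ i : Fin n, sgn a b i * σ i
      = ∑ i ∈ Finset.range a, v i - ∑ j ∈ Finset.range b, v (a + j) := by
  have h1 : ∑ i : Fin n, sgn a b i * σ i = ∑ i : Fin n, sgn a b i * v i := by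
    refine Finset.sum_congr rfl fun i _ => ?_
    by_cases h : (i : ℕ) < a + b
    · rw [hv i h]
    · have : sgn a b i = 0 := by unfold sgn; rw [if_neg (by omega), if_neg h]
      simp [this]
  rw [h1, Fin.sum_univ_eq_sum_range (fun i => sgn a b i * v i) n]
  obtain ⟨d, rfl⟩ := Nat.exists_eq_add_of_lt hab
  rw [add_assoc (a + b), Finset.sum_range_add, Finset.sum_range_add]
  have e1 : ∑ x ∈ Finset.range a, sgn a b x * v x = ∑ x ∈ Finset.range a, v x :=
    Finset.sum_congr rfl fun i hi => by
      rw [Finset.mem_range] at hi; simp [sgn, hi]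
  have e2 : ∑ x ∈ Finset.range b, sgn a b (a + x) * v (a + x)
      = -∑ x ∈ Finset.range b, v (a + x) := by
    rw [← Finset.sum_neg_distrib]
    exact Finset.sum_congr rfl fun i hi => by
      rw [Finset.mem_range] at hi; simp [sgn, hi]
  have e3 : ∑ x ∈ Finset.range (d + 1), sgn a b (a + b + x) * v (a + b + x) = 0 :=
    Finset.sum_eq_zero fun i _ => by
      have : ¬ (a + b + i < a) := by omega
      simp [sgn, this]
  rw [e1, e2, e3]; ring

lemma sum_sgn (n a b : ℕ) (hab : a + b < n) : ∑ i : Fin n, sgn a b i = (a : ℤ) - b := by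
  simpa using sum_blocks n a b hab (fun _ => 1) (fun _ => 1) (fun _ _ => rfl)

lemma exists_perm (n m : ℕ) (e : ℕ → ℕ) (he : ∀ i < m, e i < n)
    (hinj : ∀ i < m, ∀ j < m, e i = e j → i = j) :
    ∃ σ : Equiv.Perm (Fin n), ∀ i : Fin n, (i : ℕ) < m → (σ i : ℕ) = e i := by
  classical
  let f : {i : Fin n // (i : ℕ) < m} → Fin n := fun i => ⟨e i.1, he _ i.2⟩
  have hf : Function.Injective f := by
    intro i j hij
    have := hinj _ i.2 _ j.2 (by simpa [f] using hij)
    exact Subtype.ext (Fin.ext this)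
  let g : {i : Fin n // (i : ℕ) < m} ≃ {x // x ∈ Set.range f} := Equiv.ofInjective f hf
  refine ⟨g.extendSubtype, fun i hi => ?_⟩
  rw [Equiv.extendSubtype_apply_of_mem g i hi]
  rfl

/-- Cyclic shift of all values by `c`. -/
def shift {n : ℕ} [NeZero n] (c : Fin n) (σ : Equiv.Perm (Fin n)) : Equiv.Perm (Fin n) :=
  σ.trans (Equiv.addRight c)

lemma shift_apply {n : ℕ} [NeZero n] (c : Fin n) (σ : Equiv.Perm (Fin n)) (i : Fin n) :
    shift c σ i = σ i + c := rfl

lemma shift_shift {n : ℕ} [NeZero n] (c d : Fin n) (σ : Equiv.Perm (Fin n)) :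
    shift d (shift c σ) = shift (c + d) σ := by
  ext i; simp [shift_apply, add_assoc]

/-- The exact effect of a shift on `Dk`: each value that wraps around loses `n`. -/
lemma Dk_shift (n k a b : ℕ) [NeZero n] (hab : a + b < n) (c : Fin n) (σ : Equiv.Perm (Fin n)) :
    Dk n k a b (shift c σ) = Dk n k a b σ + ((a : ℤ) - b) * (c : ℕ)
      - n * ∑ i : Fin n, sgn a b i * (if n ≤ (σ i : ℕ) + (c : ℕ) then 1 else 0) := by
  rw [Dk_eq, Dk_eq, ← sum_sgn n a b hab, Finset.sum_mul, Finset.mul_sum, ← Finset.sum_add_distrib,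
    ← Finset.sum_sub_distrib]
  refine Finset.sum_congr rfl fun i _ => ?_
  rw [shift_apply, Fin.val_add_eq_ite]
  split_ifs with h
  · push_cast [Nat.cast_sub h]; ring
  · push_cast; ring

/-- Number of shifts of `σ` on which `Dk` vanishes. -/
def zeros (n k a b : ℕ) [NeZero n] (σ : Equiv.Perm (Fin n)) : ℕ :=
  (Finset.univ.filter fun c : Fin n => Dk n k a b (shift c σ) = 0).card

lemma sum_zeros (n k a b : ℕ) [NeZero n] :
    ∑ σ, zeros n k a b σ
      = n * (Finset.univ.filter fun σ : Equiv.Perm (Fin n) => Dk n k a b σ = 0).card := by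
  unfold zeros
  simp_rw [Finset.card_filter]
  rw [Finset.sum_comm]
  have key : ∀ c : Fin n, ∑ σ : Equiv.Perm (Fin n), (if Dk n k a b (shift c σ) = 0 then 1 else 0)
      = ∑ σ : Equiv.Perm (Fin n), (if Dk n k a b σ = 0 then 1 else 0) := by
    intro c
    refine Fintype.sum_bijective (shift c) ?_ _ _ (fun _ => rfl)
    refine Function.bijective_iff_has_inverse.2 ⟨shift (-c), fun σ => ?_, fun σ => ?_⟩ <;>
    · ext i; simp [shift_apply]
  simp_rw [key]
  simp

/-- Two zeros among the shifts of `σ` differ by an element killed by `a - b` modulo `n`. -/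
lemma dvd_of_zeros (n k a b : ℕ) [NeZero n] (hab : a + b < n) (σ : Equiv.Perm (Fin n))
    (c d : Fin n) (hc : Dk n k a b (shift c σ) = 0) (hd : Dk n k a b (shift d σ) = 0) :
    (n : ℤ) ∣ ((a : ℤ) - b) * ((c : ℕ) - (d : ℕ)) := by
  rw [Dk_shift _ _ _ _ hab] at hc hd
  set A := ∑ i : Fin n, sgn a b i * (if n ≤ (σ i : ℕ) + (c : ℕ) then (1 : ℤ) else 0)
  set B := ∑ i : Fin n, sgn a b i * (if n ≤ (σ i : ℕ) + (d : ℕ) then (1 : ℤ) else 0)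
  exact ⟨A - B, by linear_combination hc - hd⟩

/-- When `a - b` is prime to `n`, every shift orbit contains at most one zero. -/
lemma zeros_le_one (n k a b : ℕ) [NeZero n] (hab : a + b < n)
    (hcop : IsCoprime (n : ℤ) ((a : ℤ) - b)) (σ : Equiv.Perm (Fin n)) :
    zeros n k a b σ ≤ 1 := by
  refine Finset.card_le_one.2 fun c hc d hd => ?_
  have := hcop.dvd_of_dvd_mul_left
    (dvd_of_zeros n k a b hab σ c d (Finset.mem_filter.1 hc).2 (Finset.mem_filter.1 hd).2)
  have h0 := Int.eq_zero_of_abs_lt_dvd this (by have := c.2; have := d.2; rw [abs_lt]; omega)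
  apply Fin.ext; omega

lemma val_shift {n : ℕ} [NeZero n] (σ : Equiv.Perm (Fin n)) (e : ℕ → ℕ) (m : ℕ)
    (hσ : ∀ i : Fin n, (i : ℕ) < m → (σ i : ℕ) = e i) (c : Fin n) (i : Fin n)
    (hi : (i : ℕ) < m) : (shift c σ i : ℕ) = (e i + c) % n := by
  rw [shift_apply, Fin.val_add, hσ i hi]

/-- For `a = b + 1` some shift orbit contains no zero. One position of the first block gets the
value `0`; the others are matched with the second block in pairs of adjacent values, the larger
one carrying the plus sign. The shift `c` with `n ∣ k + b + c` is the only candidate for a zero,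
and the parity of the pairs is chosen so that this shift splits none of them; there
`Dk = k + b + c > 0`. -/
lemma exists_no_zeros_one (n k b : ℕ) [NeZero n] (hk : 1 ≤ k)
    (hab : b + 1 + b < n) : ∃ σ : Equiv.Perm (Fin n), zeros n k (b + 1) b σ = 0 := by
  have hn : 0 < n := by omega
  obtain ⟨c, hcn, hc⟩ : ∃ c : ℕ, c < n ∧ (n : ℤ) ∣ k + b + c := by
    refine ⟨((-(k + b : ℤ)) % n).toNat, ?_, ?_⟩
    · have := Int.emod_lt_of_pos (-(k + b : ℤ)) (by omega : (0 : ℤ) < n)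
      have := Int.emod_nonneg (-(k + b : ℤ)) (by omega : (n : ℤ) ≠ 0)
      omega
    · have := Int.emod_nonneg (-(k + b : ℤ)) (by omega : (n : ℤ) ≠ 0)
      rw [Int.toNat_of_nonneg this]
      apply Int.dvd_of_emod_eq_zero
      simp
  obtain ⟨s, hs1, hs2, hs⟩ : ∃ s : ℕ, 1 ≤ s ∧ s ≤ 2 ∧ (s + 1 + c + n) % 2 = 1 := by
    rcases Nat.mod_two_eq_zero_or_one (1 + 1 + c + n) with h | h
    · exact ⟨2, by omega, by omega, by omega⟩
    · exact ⟨1, by omega, by omega, by omega⟩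
  let e : ℕ → ℕ := fun i => if i < b then s + 2 * i + 1 else if i = b then 0
    else s + 2 * (i - (b + 1))
  obtain ⟨σ, hσ⟩ := exists_perm n (b + 1 + b) e
    (by intro i hi; simp only [e]; split_ifs <;> omega)
    (by intro i hi j hj h; simp only [e] at h; split_ifs at h <;> omega)
  have hpos : Dk n k (b + 1) b (shift ⟨c, hcn⟩ σ) = k + b + c := by
    rw [Dk_eq, sum_blocks n (b + 1) b hab _ (fun i => (((e i + c) % n : ℕ) : ℤ) + k)
      (fun i hi => by rw [val_shift σ e _ hσ _ i hi]), Finset.sum_range_succ]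
    have h1 : ∀ j ∈ Finset.range b, (((e j + c) % n : ℕ) : ℤ) + k
        = ((((e (b + 1 + j) + c) % n : ℕ) : ℤ) + k) + 1 := by
      intro j hj
      rw [Finset.mem_range] at hj
      have ej : e j = s + 2 * j + 1 := by simp [e, hj]
      have ej' : e (b + 1 + j) = s + 2 * j := by
        simp only [e]; rw [if_neg (by omega), if_neg (by omega)]; omega
      rw [ej, ej']
      have : (s + 2 * j + 1 + c) % n = (s + 2 * j + c) % n + 1 := by
        rcases lt_or_ge (s + 2 * j + c) n with h | h
        · rw [Nat.mod_eq_of_lt h, Nat.mod_eq_of_lt (by omega)]; omega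
        · rw [Nat.mod_eq_sub_mod h, Nat.mod_eq_sub_mod (by omega), Nat.mod_eq_of_lt (by omega),
            Nat.mod_eq_of_lt (by omega)]
          omega
      rw [this]; push_cast; ring
    rw [Finset.sum_congr rfl h1, Finset.sum_add_distrib]
    have eb : e b = 0 := by simp [e]
    rw [eb, zero_add, Nat.mod_eq_of_lt hcn]
    simp; ring
  refine ⟨σ, Finset.card_eq_zero.2 (Finset.filter_eq_empty_iff.2 fun d _ hd => ?_)⟩
  -- a zero at the shift `d` forces `n ∣ d - c`, hence `d = c`
  have e1 := Dk_shift n k (b + 1) b hab d σ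
  have e2 := Dk_shift n k (b + 1) b hab ⟨c, hcn⟩ σ
  rw [hd] at e1
  rw [hpos] at e2
  set A := ∑ i : Fin n, sgn (b + 1) b i * (if n ≤ (σ i : ℕ) + (d : ℕ) then (1 : ℤ) else 0)
  simp only at e2
  set B := ∑ i : Fin n, sgn (b + 1) b i * (if n ≤ (σ i : ℕ) + c then (1 : ℤ) else 0)
  have hdc : (n : ℤ) ∣ (d : ℕ) - c := by
    obtain ⟨t, ht⟩ := hc
    refine ⟨A - B - t, ?_⟩
    push_cast at e1 e2
    linear_combination e2 - e1 - ht
  have h0 := Int.eq_zero_of_abs_lt_dvd hdc (by have := d.2; rw [abs_lt]; omega)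
  have hdc' : d = ⟨c, hcn⟩ := by apply Fin.ext; simp only; omega
  rw [hdc', hpos] at hd
  omega

/-- For `a = b + 2` some `σ` has `Dk > 0` on its whole shift orbit. The values `0` and `z`, with
`z ∈ {b, b + 1}`, go to two positions of the first block; the others are matched with the second
block in pairs of adjacent values, the smaller one carrying the plus sign, so that after any shift
a pair contributes at least `-1`. -/
lemma exists_no_zeros_two (n k b : ℕ) [NeZero n] (hk : 1 ≤ k)
    (hab : b + 2 + b < n) : ∃ σ : Equiv.Perm (Fin n), zeros n k (b + 2) b σ = 0 ∧
      Dk n k (b + 2) b σ = 2 * k + (2 * (b / 2 : ℕ) + 1 : ℤ) - b := by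
  have hn : 0 < n := by omega
  let t := b / 2
  have ht : t = b / 2 := rfl
  let e : ℕ → ℕ := fun i => if i < b then (if i < t then 1 + 2 * i else 2 + 2 * i)
    else if i = b then 0 else if i = b + 1 then 2 * t + 1
    else (if i - (b + 2) < t then 2 + 2 * (i - (b + 2)) else 3 + 2 * (i - (b + 2)))
  obtain ⟨σ, hσ⟩ := exists_perm n (b + 2 + b) e
    (by intro i hi; simp only [e]; split_ifs <;> omega)
    (by intro i hi j hj h; simp only [e] at h; split_ifs at h <;> omega)
  have eb : e b = 0 := by simp [e]
  have eb' : e (b + 1) = 2 * t + 1 := by simp [e]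
  have epair : ∀ j < b, e (b + 2 + j) = e j + 1 := by
    intro j hj
    simp only [e]
    split_ifs <;> omega
  have hD : ∀ c : Fin n, Dk n k (b + 2) b (shift c σ) =
      ∑ j ∈ Finset.range b, ((((e j + c) % n : ℕ) : ℤ) - ((e j + 1 + c) % n : ℕ))
      + 2 * k + (c : ℕ) + ((2 * t + 1 + c) % n : ℕ) := by
    intro c
    rw [Dk_eq, sum_blocks n (b + 2) b hab _ (fun i => (((e i + c) % n : ℕ) : ℤ) + k)
      (fun i hi => by rw [val_shift σ e _ hσ _ i hi]), Finset.sum_range_succ,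
      Finset.sum_range_succ, eb, eb', zero_add, Nat.mod_eq_of_lt c.2]
    have h1 : ∑ j ∈ Finset.range b, ((((e (b + 2 + j) + c) % n : ℕ) : ℤ) + k)
        = ∑ j ∈ Finset.range b, ((((e j + 1 + c) % n : ℕ) : ℤ) + k) :=
      Finset.sum_congr rfl fun j hj => by rw [epair j (Finset.mem_range.1 hj)]
    rw [h1, Finset.sum_sub_distrib, Finset.sum_add_distrib, Finset.sum_add_distrib]
    ring
  refine ⟨σ, Finset.card_eq_zero.2 (Finset.filter_eq_empty_iff.2 fun c _ hc => ?_), ?_⟩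
  · rw [hD] at hc
    have h1 : -(b : ℤ) ≤ ∑ j ∈ Finset.range b,
        ((((e j + c) % n : ℕ) : ℤ) - ((e j + 1 + c) % n : ℕ)) := by
      have : ∑ j ∈ Finset.range b, (-1 : ℤ) ≤ ∑ j ∈ Finset.range b,
        ((((e j + c) % n : ℕ) : ℤ) - ((e j + 1 + c) % n : ℕ)) := by
        refine Finset.sum_le_sum fun j _ => ?_
        have : (e j + 1 + c) % n ≤ (e j + c) % n + 1 := by
          rw [show e j + 1 + (c : ℕ) = (e j + c) + 1 by ring, Nat.add_mod]
          refine (Nat.mod_le _ _).trans ?_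
          gcongr
          exact Nat.mod_le _ _
        omega
      simpa using this
    have h2 : b ≤ (c : ℕ) + (2 * t + 1 + c) % n := by
      have := c.2
      rcases lt_or_ge (2 * t + 1 + (c : ℕ)) n with h | h
      · rw [Nat.mod_eq_of_lt h]; omega
      · omega
    omega
  · have h0 : shift 0 σ = σ := by ext i; simp [shift_apply]
    have := hD 0
    rw [h0] at this
    rw [this]
    have h1 : ∑ j ∈ Finset.range b,
        ((((e j + ((0 : Fin n) : ℕ)) % n : ℕ) : ℤ) - ((e j + 1 + ((0 : Fin n) : ℕ)) % n : ℕ))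
        = ∑ j ∈ Finset.range b, (-1 : ℤ) := by
      refine Finset.sum_congr rfl fun j hj => ?_
      rw [Finset.mem_range] at hj
      have : e j + 1 < n := by
        simp only [e]; split_ifs <;> omega
      simp only [Fin.val_zero, add_zero]
      rw [Nat.mod_eq_of_lt (by omega), Nat.mod_eq_of_lt this]
      push_cast; ring
    rw [h1]
    simp only [Fin.val_zero, add_zero]
    rw [Nat.mod_eq_of_lt (show 2 * t + 1 < n by omega)]
    simp [ht]; ring

/-! ### Antipodal pairs of values, for even `n` -/

section Antipodal

variable {n : ℕ}

/-- Values `x` such that exactly one of `x` and its antipode `x + e` is used by the first `m`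
positions. Here `e` is the element `n / 2` of `Fin n`. -/
def unmatched (e : Fin n) (m : ℕ) (σ : Equiv.Perm (Fin n)) : Finset (Fin n) :=
  Finset.univ.filter fun x => ¬((σ.symm x : ℕ) < m ↔ (σ.symm (x + e) : ℕ) < m)

/-- Number of values in the upper half `{n/2, …, n-1}` used by the first `m` positions. -/
def upper (e : Fin n) (m : ℕ) (σ : Equiv.Perm (Fin n)) : ℕ :=
  (Finset.univ.filter fun i : Fin n => (i : ℕ) < m ∧ (e : ℕ) ≤ (σ i : ℕ)).card

/-- The transposition of the smallest element of `T` with its antipode. -/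
def minSwap (e : Fin n) (T : Finset (Fin n)) : Equiv.Perm (Fin n) :=
  if h : T.Nonempty then Equiv.swap (T.min' h) (T.min' h + e) else 1

/-- Swap the values of the smallest unmatched antipodal pair, if there is one. -/
def pairFlip (e : Fin n) (m : ℕ) (σ : Equiv.Perm (Fin n)) : Equiv.Perm (Fin n) :=
  σ.trans (minSwap e (unmatched e m σ))

lemma mem_unmatched (e : Fin n) (m : ℕ) (σ : Equiv.Perm (Fin n)) (x : Fin n) :
    x ∈ unmatched e m σ ↔ ¬((σ.symm x : ℕ) < m ↔ (σ.symm (x + e) : ℕ) < m) := by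
  simp [unmatched]

lemma half_add_half [NeZero n] (e : Fin n) (he : n = 2 * (e : ℕ)) : e + e = 0 := by
  apply Fin.ext
  rw [Fin.val_add_eq_ite, if_pos (by omega)]
  simp; omega

lemma half_ne_zero [NeZero n] (e : Fin n) (he : n = 2 * (e : ℕ)) : e ≠ 0 := by
  rintro rfl
  exact NeZero.ne n (by simpa using he)

lemma le_val_add_half (e : Fin n) (he : n = 2 * (e : ℕ)) (x : Fin n) :
    (e : ℕ) ≤ ((x + e : Fin n) : ℕ) ↔ ¬ (e : ℕ) ≤ (x : ℕ) := by
  have := x.2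
  rw [Fin.val_add_eq_ite]
  split_ifs <;> omega

lemma unmatched_swap [NeZero n] (e : Fin n) (he : n = 2 * (e : ℕ)) (m : ℕ) (σ : Equiv.Perm (Fin n))
    (x : Fin n) :
    unmatched e m (σ.trans (Equiv.swap x (x + e))) = unmatched e m σ := by
  have h2 := half_add_half e he
  have hx : x + e ≠ x := by simpa using half_ne_zero e he
  ext y
  simp only [mem_unmatched, Equiv.symm_trans_apply, Equiv.symm_swap]
  by_cases h : y = x
  · subst h; simp [iff_comm]
  by_cases h' : y = x + e
  · subst h'; simp [add_assoc, h2, iff_comm]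
  · have h1 : y + e ≠ x := by
      rintro rfl; apply h'; simp [add_assoc, h2]
    have h3 : y + e ≠ x + e := by simpa using h
    rw [Equiv.swap_apply_of_ne_of_ne h h', Equiv.swap_apply_of_ne_of_ne h1 h3]

lemma unmatched_flip [NeZero n] (e : Fin n) (he : n = 2 * (e : ℕ)) (m : ℕ)
    (σ : Equiv.Perm (Fin n)) :
    unmatched e m (pairFlip e m σ) = unmatched e m σ := by
  unfold pairFlip minSwap
  split_ifs
  · exact unmatched_swap e he m σ _
  · rfl

lemma pairFlip_pairFlip [NeZero n] (e : Fin n) (he : n = 2 * (e : ℕ)) (m : ℕ)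
    (σ : Equiv.Perm (Fin n)) :
    pairFlip e m (pairFlip e m σ) = σ := by
  have h : pairFlip e m (pairFlip e m σ)
      = (pairFlip e m σ).trans (minSwap e (unmatched e m (pairFlip e m σ))) := rfl
  rw [h, unmatched_flip e he]
  ext i
  unfold pairFlip minSwap
  split_ifs <;> simp

/-- The product over the first `m` positions of a weight of the values. -/
def weight (χ : Fin n → ℤ) (m : ℕ) (σ : Equiv.Perm (Fin n)) : ℤ :=
  ∏ i : Fin n, if (i : ℕ) < m then χ (σ i) else 1

/-- `-1` on the upper half of the values, `1` on the lower half. -/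
def halfSign (e x : Fin n) : ℤ := if (e : ℕ) ≤ (x : ℕ) then -1 else 1

lemma weight_halfSign (e : Fin n) (m : ℕ) (σ : Equiv.Perm (Fin n)) :
    weight (halfSign e) m σ = (-1) ^ upper e m σ := by
  unfold weight upper halfSign
  rw [← Finset.prod_const, Finset.prod_filter]
  refine Finset.prod_congr rfl fun i _ => ?_
  split_ifs <;> first | rfl | omega

lemma weight_flip [NeZero n] (e : Fin n) (he : n = 2 * (e : ℕ)) (m : ℕ) (σ : Equiv.Perm (Fin n))
    (h : (unmatched e m σ).Nonempty) :
    weight (halfSign e) m (pairFlip e m σ) = -weight (halfSign e) m σ := by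
  have h2 := half_add_half e he
  obtain ⟨x, hxm, hx⟩ : ∃ x, x ∈ unmatched e m σ ∧
      pairFlip e m σ = σ.trans (Equiv.swap x (x + e)) :=
    ⟨_, Finset.min'_mem _ h, by rw [pairFlip, minSwap, dif_pos h]⟩
  have hne : x + e ≠ x := by simpa using half_ne_zero e he
  have hsw : ∀ y, halfSign e (Equiv.swap x (x + e) y)
      = halfSign e y * if y = x ∨ y = x + e then -1 else 1 := by
    intro y
    have hs := le_val_add_half e he x
    by_cases h : y = x
    · subst h
      simp only [Equiv.swap_apply_left, halfSign, true_or, if_true]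
      split_ifs <;> omega
    by_cases h' : y = x + e
    · subst h'
      simp only [Equiv.swap_apply_right, halfSign, or_true, if_true]
      split_ifs <;> omega
    · rw [Equiv.swap_apply_of_ne_of_ne h h']; simp [h, h']
  -- exactly one of the two swapped values sits on one of the first `m` positions
  obtain ⟨j, hj⟩ : ∃ j : Fin n, ∀ i : Fin n,
      ((i : ℕ) < m ∧ (σ i = x ∨ σ i = x + e)) ↔ i = j := by
    simp only [unmatched, Finset.mem_filter, Finset.mem_univ, true_and] at hxm
    by_cases hA : (σ.symm x : ℕ) < m
    · have hB : ¬ (σ.symm (x + e) : ℕ) < m := by tauto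
      refine ⟨σ.symm x, fun i => ⟨?_, ?_⟩⟩
      · rintro ⟨hi, hi' | hi'⟩
        · rw [← hi']; simp
        · rw [← hi'] at hB; simp [hi] at hB
      · rintro rfl; simp [hA]
    · have hB : (σ.symm (x + e) : ℕ) < m := by tauto
      refine ⟨σ.symm (x + e), fun i => ⟨?_, ?_⟩⟩
      · rintro ⟨hi, hi' | hi'⟩
        · rw [← hi'] at hA; simp [hi] at hA
        · rw [← hi']; simp
      · rintro rfl; simp [hB]
  have hprod : ∏ i : Fin n, (if i = j then (-1 : ℤ) else 1) = -1 := by simp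
  rw [hx, ← mul_neg_one, ← hprod]
  unfold weight
  rw [← Finset.prod_mul_distrib]
  refine Finset.prod_congr rfl fun i _ => ?_
  simp only [Equiv.trans_apply, hsw, ← hj i]
  by_cases hi : (i : ℕ) < m <;> simp [hi]

/-- Without unmatched pairs, `x ↦ x + e` maps the used lower values onto the used upper ones. -/
lemma sum_upper [NeZero n] (e : Fin n) (he : n = 2 * (e : ℕ)) (m : ℕ)
    (σ : Equiv.Perm (Fin n)) (h : unmatched e m σ = ∅) (f : Fin n → ℕ) :
    ∑ i ∈ Finset.univ.filter (fun i : Fin n => (i : ℕ) < m ∧ (e : ℕ) ≤ (σ i : ℕ)), f (σ i)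
      = ∑ i ∈ Finset.univ.filter (fun i : Fin n => (i : ℕ) < m ∧ ¬ (e : ℕ) ≤ (σ i : ℕ)),
          f (σ i + e) := by
  have h2 := half_add_half e he
  have hcl : ∀ x, ((σ.symm x : ℕ) < m ↔ (σ.symm (x + e) : ℕ) < m) := by
    intro x
    have : x ∉ unmatched e m σ := by simp [h]
    simpa [unmatched] using this
  have hcl' : ∀ i : Fin n, ((σ.symm (σ i + e) : Fin n) : ℕ) < m ↔ (i : ℕ) < m := by
    intro i; rw [← hcl]; simp
  refine Finset.sum_bij' (fun i _ => σ.symm (σ i + e)) (fun i _ => σ.symm (σ i + e))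
    ?_ ?_ ?_ ?_ ?_
  · intro i hi
    simp only [Finset.mem_filter, Finset.mem_univ, true_and, Equiv.apply_symm_apply,
      hcl', le_val_add_half e he, not_not] at hi ⊢
    exact hi
  · intro i hi
    simp only [Finset.mem_filter, Finset.mem_univ, true_and, Equiv.apply_symm_apply,
      hcl', le_val_add_half e he] at hi ⊢
    exact hi
  · intro i _; simp [add_assoc, h2]
  · intro i _; simp [add_assoc, h2]
  · intro i _; simp [add_assoc, h2]

/-- A set of `m` values without unmatched pair has half of its elements in the upper half. -/
lemma two_mul_upper [NeZero n] (e : Fin n) (he : n = 2 * (e : ℕ)) (m : ℕ) (hm : m ≤ n)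
    (σ : Equiv.Perm (Fin n)) (h : unmatched e m σ = ∅) : 2 * upper e m σ = m := by
  have hcard := sum_upper e he m σ h (fun _ => 1)
  rw [← Finset.card_eq_sum_ones, ← Finset.card_eq_sum_ones] at hcard
  have htot : (Finset.univ.filter fun i : Fin n => (i : ℕ) < m).card = m := by
    rw [Fin.card_filter_val_lt]; omega
  have := Finset.card_filter_add_card_filter_not (s := Finset.univ.filter
    fun i : Fin n => (i : ℕ) < m) (fun i => (e : ℕ) ≤ (σ i : ℕ))
  rw [Finset.filter_filter, Finset.filter_filter, ← hcard, htot] at this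
  unfold upper
  omega

/-- Each used antipodal pair `{x, x + e}` has sum `e` modulo `2`, so an even number of pairs
has even sum. -/
lemma even_sum_of_closed [NeZero n] (e : Fin n) (he : n = 2 * (e : ℕ)) (p : ℕ) (hp : 2 * p ≤ n)
    (hev : Even p) (σ : Equiv.Perm (Fin n)) (h : unmatched e (2 * p) σ = ∅) :
    Even (∑ i : Fin n, if (i : ℕ) < 2 * p then (σ i : ℕ) else 0) := by
  have hU := two_mul_upper e he (2 * p) hp σ h
  have hcard := sum_upper e he (2 * p) σ h (fun _ => 1)
  rw [← Finset.card_eq_sum_ones, ← Finset.card_eq_sum_ones] at hcard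
  have hsum := sum_upper e he (2 * p) σ h (fun x => (x : ℕ))
  rw [← Finset.sum_filter, ← Finset.sum_filter_add_sum_filter_not _
    (fun i : Fin n => (e : ℕ) ≤ (σ i : ℕ)), Finset.filter_filter, Finset.filter_filter, hsum,
    ← Finset.sum_add_distrib]
  have : ∀ i ∈ Finset.univ.filter fun i : Fin n => (i : ℕ) < 2 * p ∧ ¬ (e : ℕ) ≤ (σ i : ℕ),
      ((σ i + e : Fin n) : ℕ) + (σ i : ℕ) = 2 * (σ i : ℕ) + (e : ℕ) := by
    intro i hi
    have hi' := (Finset.mem_filter.1 hi).2.2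
    rw [Fin.val_add_eq_ite, if_neg (by omega)]; ring
  rw [Finset.sum_congr rfl this, Finset.sum_add_distrib, ← Finset.mul_sum, Finset.sum_const,
    ← hcard]
  have hU' : (Finset.univ.filter fun i : Fin n =>
      (i : ℕ) < 2 * p ∧ (e : ℕ) ≤ (σ i : ℕ)).card = p := by
    unfold upper at hU; omega
  rw [hU', smul_eq_mul]
  exact (even_two_mul _).add (hev.mul_right _)

/-- Swapping the first unmatched pair cancels all permutations having one; the remaining ones
all have the same weight. -/
lemma sum_weight_halfSign [NeZero n] (e : Fin n) (he : n = 2 * (e : ℕ)) (p : ℕ) (hm : 2 * p ≤ n) :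
    ∑ σ : Equiv.Perm (Fin n), weight (halfSign e) (2 * p) σ
      = (-1) ^ p * (Finset.univ.filter fun σ : Equiv.Perm (Fin n) =>
          unmatched e (2 * p) σ = ∅).card := by
  rw [← Finset.sum_filter_add_sum_filter_not Finset.univ
    (fun σ : Equiv.Perm (Fin n) => unmatched e (2 * p) σ = ∅)]
  have h1 : ∑ σ : Equiv.Perm (Fin n) with unmatched e (2 * p) σ = ∅,
      weight (halfSign e) (2 * p) σ
      = ∑ σ : Equiv.Perm (Fin n) with unmatched e (2 * p) σ = ∅, (-1) ^ p := by
    refine Finset.sum_congr rfl fun σ hσ => ?_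
    rw [weight_halfSign]
    have := two_mul_upper e he (2 * p) hm σ (Finset.mem_filter.1 hσ).2
    congr 1; omega
  have h2 : ∑ σ : Equiv.Perm (Fin n) with ¬ unmatched e (2 * p) σ = ∅,
      weight (halfSign e) (2 * p) σ = 0 := by
    refine Finset.sum_involution (fun σ _ => pairFlip e (2 * p) σ) ?_ ?_ ?_ ?_
    · intro σ hσ
      rw [weight_flip e he _ _ (Finset.nonempty_iff_ne_empty.2 (Finset.mem_filter.1 hσ).2)]
      ring
    · intro σ hσ hne heq
      have := weight_flip e he (2 * p) σ
        (Finset.nonempty_iff_ne_empty.2 (Finset.mem_filter.1 hσ).2)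
      rw [heq] at this
      omega
    · intro σ hσ
      simpa [unmatched_flip e he] using hσ
    · intro σ _; exact pairFlip_pairFlip e he _ σ
  rw [h1, h2, Finset.sum_const]
  simp [mul_comm]

/-- `weight` sums depend only on how often each value of `χ` is taken: the parity sign and
`halfSign` are both `-1` on exactly half of the values. -/
lemma sum_weight_parity (e : Fin n) (he : n = 2 * (e : ℕ)) (m : ℕ) :
    ∑ σ : Equiv.Perm (Fin n), weight (fun x => (-1) ^ (x : ℕ)) m σ
      = ∑ σ : Equiv.Perm (Fin n), weight (halfSign e) m σ := by
  obtain ⟨ψ, hψ⟩ : ∃ ψ : Equiv.Perm (Fin n), ∀ x, halfSign e (ψ x) = (-1) ^ (x : ℕ) := by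
    let f : Fin n → Fin n := fun x => if h : (x : ℕ) % 2 = 0 then ⟨x / 2, by omega⟩ else
      ⟨x / 2 + e, by omega⟩
    have hf : Function.Injective f := by
      intro x y hxy
      have hx := x.2
      have hy := y.2
      apply Fin.ext
      simp only [f] at hxy
      split_ifs at hxy <;> simp only [Fin.mk.injEq] at hxy <;> omega
    refine ⟨Equiv.ofBijective f (Finite.injective_iff_bijective.1 hf), fun x => ?_⟩
    have hx := x.2
    simp only [Equiv.ofBijective_apply, f, halfSign]
    split_ifs with h h' h'
    · simp only at h'; omega
    · rw [Even.neg_one_pow (Nat.even_iff.2 h)]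
    · rw [Odd.neg_one_pow (Nat.odd_iff.2 (by omega))]
    · simp only at h'; omega
  refine Fintype.sum_equiv (Equiv.mulLeft ψ) _ _ fun σ => ?_
  unfold weight
  refine Finset.prod_congr rfl fun i _ => ?_
  simp [hψ]

end Antipodal

/-! ### The case `a = b + 2`, `n` even -/

lemma even_Dk_iff (n k b : ℕ) (hab : b + 2 + b < n) (σ : Equiv.Perm (Fin n)) :
    Even (Dk n k (b + 2) b σ)
      ↔ Even (∑ i : Fin n, if (i : ℕ) < 2 * (b + 1) then (σ i : ℕ) else 0) := by
  have hD : Dk n k (b + 2) b σ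
      + ((∑ i : Fin n, if (i : ℕ) < 2 * (b + 1) then (σ i : ℕ) else 0 : ℕ) : ℤ)
      = 2 * (∑ i : Fin n, if (i : ℕ) < b + 2 then ((σ i : ℕ) : ℤ) else 0) + 2 * k := by
    have h1 : Dk n k (b + 2) b σ = ∑ i : Fin n, sgn (b + 2) b i * ((σ i : ℕ) : ℤ) + 2 * k := by
      rw [Dk_eq]
      simp_rw [mul_add]
      rw [Finset.sum_add_distrib, ← Finset.sum_mul, sum_sgn _ _ _ hab]
      push_cast; ring
    rw [h1, Finset.mul_sum, add_right_comm]
    congr 1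
    push_cast
    rw [← Finset.sum_add_distrib]
    refine Finset.sum_congr rfl fun i _ => ?_
    unfold sgn
    split_ifs <;> omega
  rw [← Int.even_coe_nat]
  have : Even (Dk n k (b + 2) b σ
      + ((∑ i : Fin n, if (i : ℕ) < 2 * (b + 1) then (σ i : ℕ) else 0 : ℕ) : ℤ)) := by
    rw [hD]; exact (even_two_mul _).add (even_two_mul _)
  exact Int.even_add.1 this

lemma weight_parity (n k b : ℕ) (hab : b + 2 + b < n) (σ : Equiv.Perm (Fin n)) :
    weight (fun x => (-1) ^ (x : ℕ)) (2 * (b + 1)) σ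
      = if Even (Dk n k (b + 2) b σ) then 1 else -1 := by
  have hw : weight (fun x => (-1) ^ (x : ℕ)) (2 * (b + 1)) σ
      = (-1) ^ (∑ i : Fin n, if (i : ℕ) < 2 * (b + 1) then (σ i : ℕ) else 0) := by
    unfold weight
    rw [← Finset.prod_pow_eq_pow_sum]
    refine Finset.prod_congr rfl fun i _ => ?_
    split_ifs <;> simp
  have hpar := even_Dk_iff n k b hab σ
  rw [hw]
  split_ifs with h
  · exact Even.neg_one_pow (hpar.1 h)
  · exact Odd.neg_one_pow (Nat.not_even_iff_odd.1 fun h' => h (hpar.2 h'))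

lemma even_of_zero (n k b : ℕ) [NeZero n] (hab : b + 2 + b < n) (e : Fin n)
    (he : n = 2 * (e : ℕ)) (σ : Equiv.Perm (Fin n)) (c : Fin n)
    (hc : Dk n k (b + 2) b (shift c σ) = 0) : Even (Dk n k (b + 2) b σ) := by
  rw [Dk_shift _ _ _ _ hab] at hc
  set A := ∑ i : Fin n, sgn (b + 2) b i * (if n ≤ (σ i : ℕ) + (c : ℕ) then (1 : ℤ) else 0)
  have he' : (n : ℤ) = 2 * (e : ℕ) := by exact_mod_cast he
  rw [he'] at hc
  push_cast at hc
  exact ⟨(e : ℕ) * A - (c : ℕ), by linear_combination hc⟩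

lemma eq_or_eq_add_half (n k b : ℕ) [NeZero n] (hab : b + 2 + b < n) (e : Fin n)
    (he : n = 2 * (e : ℕ)) (σ : Equiv.Perm (Fin n)) (c d : Fin n)
    (hc : Dk n k (b + 2) b (shift c σ) = 0) (hd : Dk n k (b + 2) b (shift d σ) = 0) :
    d = c ∨ d = c + e := by
  have h := dvd_of_zeros n k (b + 2) b hab σ d c hd hc
  have he' : (n : ℤ) = 2 * (e : ℕ) := by exact_mod_cast he
  have h2 : ((b + 2 : ℕ) : ℤ) - b = 2 := by push_cast; ring
  rw [h2, he'] at h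
  have h3 : ((e : ℕ) : ℤ) ∣ (d : ℕ) - (c : ℕ) := (mul_dvd_mul_iff_left two_ne_zero).1 h
  obtain ⟨t, ht⟩ := h3
  have hcn := c.2
  have hdn := d.2
  have hepos : (0 : ℤ) < (e : ℕ) := by omega
  have ht1 : t < 2 := by
    by_contra h'
    have : ((e : ℕ) : ℤ) * 2 ≤ (e : ℕ) * t := mul_le_mul_of_nonneg_left (by omega) hepos.le
    omega
  have ht2 : -2 < t := by
    by_contra h'
    have : ((e : ℕ) : ℤ) * t ≤ (e : ℕ) * (-2) := mul_le_mul_of_nonneg_left (by omega) hepos.le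
    omega
  have : t = -1 ∨ t = 0 ∨ t = 1 := by omega
  rcases this with rfl | rfl | rfl
  · right; apply Fin.ext; rw [Fin.val_add_eq_ite]; split_ifs <;> omega
  · left; apply Fin.ext; omega
  · right; apply Fin.ext; rw [Fin.val_add_eq_ite]; split_ifs <;> omega

lemma zeros_le_two (n k b : ℕ) [NeZero n] (hab : b + 2 + b < n) (e : Fin n)
    (he : n = 2 * (e : ℕ)) (σ : Equiv.Perm (Fin n)) : zeros n k (b + 2) b σ ≤ 2 := by
  unfold zeros
  rcases Finset.eq_empty_or_nonempty
    (Finset.univ.filter fun c : Fin n => Dk n k (b + 2) b (shift c σ) = 0) with h | ⟨c, hc⟩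
  · simp [h]
  · refine (Finset.card_le_card (t := {c, c + e}) fun d hd => ?_).trans Finset.card_le_two
    have := eq_or_eq_add_half n k b hab e he σ c d (Finset.mem_filter.1 hc).2
      (Finset.mem_filter.1 hd).2
    simpa using this

/-- If `Dk` vanishes at `σ` and at its half-turn, the signed number of values in the upper half
is `1`, so an odd number of upper values is used. -/
lemma odd_upper (n k b : ℕ) [NeZero n] (hab : b + 2 + b < n) (e : Fin n)
    (he : n = 2 * (e : ℕ)) (σ : Equiv.Perm (Fin n)) (h0 : Dk n k (b + 2) b σ = 0)
    (h1 : Dk n k (b + 2) b (shift e σ) = 0) : Odd (upper e (2 * (b + 1)) σ) := by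
  rw [Dk_shift _ _ _ _ hab, h0] at h1
  have hA : ∑ i : Fin n,
      sgn (b + 2) b i * (if n ≤ (σ i : ℕ) + (e : ℕ) then (1 : ℤ) else 0) = 1 := by
    set A := ∑ i : Fin n, sgn (b + 2) b i * (if n ≤ (σ i : ℕ) + (e : ℕ) then (1 : ℤ) else 0)
    have hn : (n : ℤ) ≠ 0 := by exact_mod_cast NeZero.ne n
    have he' : (n : ℤ) = 2 * (e : ℕ) := by exact_mod_cast he
    apply mul_left_cancel₀ hn
    push_cast at h1
    linear_combination (-1 : ℤ) * h1 - he'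
  have hU : ((upper e (2 * (b + 1)) σ : ℕ) : ℤ)
      + ∑ i : Fin n, sgn (b + 2) b i * (if n ≤ (σ i : ℕ) + (e : ℕ) then (1 : ℤ) else 0)
      = 2 * ∑ i : Fin n, (if (i : ℕ) < b + 2 ∧ (e : ℕ) ≤ (σ i : ℕ) then (1 : ℤ) else 0) := by
    unfold upper
    rw [Finset.card_filter, Finset.mul_sum]
    push_cast
    rw [← Finset.sum_add_distrib]
    refine Finset.sum_congr rfl fun i _ => ?_
    unfold sgn
    split_ifs <;> omega
  rw [hA] at hU
  rw [← Int.odd_coe_nat]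
  exact ⟨_, eq_sub_of_add_eq hU |>.trans (by
    rw [show ∀ x : ℤ, 2 * x - 1 = 2 * (x - 1) + 1 from fun x => by ring])⟩

lemma unmatched_shift {n : ℕ} [NeZero n] (e : Fin n) (m : ℕ) (σ : Equiv.Perm (Fin n)) (c : Fin n)
    (h : unmatched e m σ = ∅) : unmatched e m (shift c σ) = ∅ := by
  rw [Finset.eq_empty_iff_forall_notMem] at h ⊢
  intro x hx
  apply h (x - c)
  rw [mem_unmatched] at hx ⊢
  have hs : ∀ y, (shift c σ).symm y = σ.symm (y - c) := by
    intro y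
    rw [Equiv.symm_apply_eq, shift_apply]; simp
  rw [hs, hs] at hx
  rwa [sub_add_eq_add_sub]

/-- An antipodally closed set of `2 (b + 1)` values, `b + 1` even, allows at most one zero per
orbit. -/
lemma zeros_le_one_of_closed (n k b : ℕ) [NeZero n] (hab : b + 2 + b < n) (e : Fin n)
    (he : n = 2 * (e : ℕ)) (hb : Even (b + 1)) (σ : Equiv.Perm (Fin n))
    (hσ : unmatched e (2 * (b + 1)) σ = ∅) : zeros n k (b + 2) b σ ≤ 1 := by
  refine Finset.card_le_one.2 fun c hc d hd => ?_
  have hc := (Finset.mem_filter.1 hc).2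
  have hd := (Finset.mem_filter.1 hd).2
  rcases eq_or_eq_add_half n k b hab e he σ c d hc hd with h | h
  · exact h.symm
  · exfalso
    rw [h, ← shift_shift] at hd
    have h1 := odd_upper n k b hab e he _ hc hd
    have h2 := two_mul_upper e he (2 * (b + 1)) (by omega) _ (unmatched_shift e _ σ c hσ)
    have h3 : upper e (2 * (b + 1)) (shift c σ) = b + 1 := by omega
    rw [h3] at h1
    exact (Nat.not_even_iff_odd.2 h1) hb

/-- Positions `2 j` and `2 j + 1` receive the antipodal values `j` and `j + n / 2`. -/
lemma exists_closed (n p : ℕ) [NeZero n] (e : Fin n) (he : n = 2 * (e : ℕ)) :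
    ∃ σ : Equiv.Perm (Fin n), unmatched e (2 * p) σ = ∅ := by
  obtain ⟨σ, hσ⟩ := exists_perm n n (fun i => i / 2 + (e : ℕ) * (i % 2))
    (by intro i hi; rcases Nat.mod_two_eq_zero_or_one i with h | h <;> simp only [h] <;> omega)
    (by intro i hi j hj h
        rcases Nat.mod_two_eq_zero_or_one i with h1 | h1 <;>
        rcases Nat.mod_two_eq_zero_or_one j with h2 | h2 <;> simp only [h1, h2] at h <;> omega)
  refine ⟨σ, Finset.eq_empty_iff_forall_notMem.2 fun x hx => ?_⟩
  rw [mem_unmatched] at hx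
  apply hx
  have h1 := hσ (σ.symm x) (Fin.is_lt _)
  have h2 := hσ (σ.symm (x + e)) (Fin.is_lt _)
  simp only [Equiv.apply_symm_apply] at h1 h2
  rw [Fin.val_add_eq_ite] at h2
  have hi := (σ.symm x).2
  have hj := (σ.symm (x + e)).2
  generalize ((σ.symm x : Fin n) : ℕ) = i at *
  generalize ((σ.symm (x + e) : Fin n) : ℕ) = j at *
  rcases Nat.mod_two_eq_zero_or_one i with h3 | h3 <;>
  rcases Nat.mod_two_eq_zero_or_one j with h4 | h4 <;> simp only [h3, h4] at h1 h2 <;>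
  split_ifs at h2 <;> omega

/-- The zeros of an orbit number at most `1 + w`, with `w = ±1` the parity sign of `Dk`; when
`b + 1` is even, orbits of antipodally closed sets save one more. In total the signs `w` sum to
`(-1) ^ (b + 1)` times the number of closed `σ`. -/
lemma sum_zeros_lt_even (n k b : ℕ) [NeZero n] (hk : 1 ≤ k) (hab : b + 2 + b < n) (e : Fin n)
    (he : n = 2 * (e : ℕ)) : ∑ σ, zeros n k (b + 2) b σ < n.factorial := by
  have hp : 2 * (b + 1) ≤ n := by omega
  have hsum := (sum_weight_parity e he (2 * (b + 1))).trans (sum_weight_halfSign e he (b + 1) hp)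
  have hone : ∑ _σ : Equiv.Perm (Fin n), (1 : ℤ) = n.factorial := by
    simp [Fintype.card_perm]
  have hbase : ∀ σ, (zeros n k (b + 2) b σ : ℤ)
      ≤ 1 + weight (fun x => (-1) ^ (x : ℕ)) (2 * (b + 1)) σ := by
    intro σ
    rw [weight_parity n k b hab σ]
    split_ifs with h
    · have := zeros_le_two n k b hab e he σ
      omega
    · have : zeros n k (b + 2) b σ = 0 :=
        Finset.card_eq_zero.2 (Finset.filter_eq_empty_iff.2 fun c _ hc =>
          h (even_of_zero n k b hab e he σ c hc))
      simp [this]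
  zify
  by_cases hb : Even (b + 1)
  · rw [hb.neg_one_pow, one_mul] at hsum
    have hcl : ∑ σ : Equiv.Perm (Fin n),
        (if unmatched e (2 * (b + 1)) σ = ∅ then (1 : ℤ) else 0)
        = (Finset.univ.filter fun σ : Equiv.Perm (Fin n) =>
          unmatched e (2 * (b + 1)) σ = ∅).card := by simp
    have htot : ∑ σ : Equiv.Perm (Fin n), (1 + weight (fun x => (-1) ^ (x : ℕ)) (2 * (b + 1)) σ
        - if unmatched e (2 * (b + 1)) σ = ∅ then (1 : ℤ) else 0) = n.factorial := by
      rw [Finset.sum_sub_distrib, Finset.sum_add_distrib, hsum, hcl, hone]; ring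
    rw [← htot]
    obtain ⟨σ₀, hz, hD⟩ := exists_no_zeros_two n k b hk hab
    refine Finset.sum_lt_sum (fun σ _ => ?_) ⟨σ₀, Finset.mem_univ _, ?_⟩
    · by_cases hσ : unmatched e (2 * (b + 1)) σ = ∅
      · rw [if_pos hσ]
        have h1 := zeros_le_one_of_closed n k b hab e he hb σ hσ
        rw [weight_parity n k b hab σ, if_pos ((even_Dk_iff n k b hab σ).2
          (even_sum_of_closed e he (b + 1) hp hb σ hσ))]
        omega
      · rw [if_neg hσ, sub_zero]; exact hbase σ
    · rw [weight_parity n k b hab σ₀, hz, if_pos]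
      · split_ifs <;> simp
      · rw [hD]
        have : b % 2 = 1 := by rw [Nat.even_iff] at hb; omega
        rw [Int.even_iff]; omega
  · rw [(Nat.not_even_iff_odd.1 hb).neg_one_pow] at hsum
    have hpos : 0 < (Finset.univ.filter fun σ : Equiv.Perm (Fin n) =>
          unmatched e (2 * (b + 1)) σ = ∅).card := by
      obtain ⟨σ, hσ⟩ := exists_closed n (b + 1) e he
      exact Finset.card_pos.2 ⟨σ, by simp [hσ]⟩
    have h1 := Finset.sum_le_sum fun σ (_ : σ ∈ Finset.univ) => hbase σ
    rw [Finset.sum_add_distrib, hone, hsum] at h1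
    omega

/-! ### Conclusion -/

lemma sum_zeros_lt_of_le_one (n k a b : ℕ) [NeZero n] (hle : ∀ σ, zeros n k a b σ ≤ 1)
    (h0 : ∃ σ, zeros n k a b σ = 0) : ∑ σ, zeros n k a b σ < n.factorial := by
  have hone : ∑ _σ : Equiv.Perm (Fin n), 1 = n.factorial := by simp [Fintype.card_perm]
  rw [← hone]
  obtain ⟨σ, hσ⟩ := h0
  exact Finset.sum_lt_sum (fun σ _ => hle σ) ⟨σ, Finset.mem_univ _, by simp [hσ]⟩

/-- Let `k, n` be positive integers and `a, b` positive integers with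
`b ∈ {a−2, a−1}` and `a + b < n`. A uniformly random bijection from `{1,…,n}` to
`{k,…,n+k−1}` satisfies `D_{a,b}(σ) = 0` with probability strictly less than `1/n`. -/
theorem prob_Dk_zero (k n a b : ℕ) (hk : 1 ≤ k) (ha : 1 ≤ a) (hb : 1 ≤ b)
    (hab : b + 2 = a ∨ b + 1 = a) (habn : a + b < n) :
    ((Finset.univ.filter
        (fun σ : Equiv.Perm (Fin n) => Dk n k a b σ = 0)).card : ℚ)
      / (Nat.factorial n : ℚ) < 1 / (n : ℚ) := by
  have : NeZero n := ⟨by omega⟩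
  have hmain : ∑ σ, zeros n k a b σ < n.factorial := by
    rcases hab with rfl | rfl
    · rcases Nat.even_or_odd' n with ⟨q, hq | hq⟩
      · exact sum_zeros_lt_even n k b hk habn ⟨q, by omega⟩ hq
      · obtain ⟨σ, hσ, -⟩ := exists_no_zeros_two n k b hk habn
        refine sum_zeros_lt_of_le_one n k _ b (zeros_le_one n k _ b habn ?_) ⟨σ, hσ⟩
        exact ⟨1, -q, by rw [hq]; push_cast; ring⟩
    · refine sum_zeros_lt_of_le_one n k _ b (zeros_le_one n k _ b habn ?_)
        (exists_no_zeros_one n k b hk habn)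
      exact ⟨0, 1, by push_cast; ring⟩
  rw [sum_zeros] at hmain
  have hn : (0 : ℚ) < n := by exact_mod_cast Nat.pos_of_ne_zero (NeZero.ne n)
  have hf : (0 : ℚ) < n.factorial := by exact_mod_cast n.factorial_pos
  rw [div_lt_div_iff₀ hf hn, one_mul, mul_comm]
  exact_mod_cast hmain
end
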